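/- arXiv:1301.6509 — 2 statements merged into one kernel-verified Lean document; each statement's English description precedes it below -/
import Mathlib

section
/- For every n ≥ 1, 8·p_n(1222, 1234) = 8·p_n(1211, 1234) = n⁴ − 6n³ + 19n² − 22n + 16. In particular, the pattern pairs (1222, 1234) and (1211, 1234) are Wilf-equivalent. -/
/-- A restricted growth function (canonical sequential form of a set partition):
a word over the positive integers whose first letter is 1 and where each letter
is at most one more than the maximum of the preceding letters. -/
def IsRGF (w : List ℕ) : Prop :=
  (∀ x ∈ w, 1 ≤ x) ∧
  (w ≠ [] → w.getD 0 0 = 1) ∧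
  ∀ i, i + 1 < w.length → w.getD (i + 1) 0 ≤ ((w.take (i + 1)).foldr max 0) + 1

/-- Two words of the same length are order-isomorphic: corresponding entries
compare the same way (this preserves equalities as well). -/
def WordOrdIso (s t : List ℕ) : Prop :=
  s.length = t.length ∧
  ∀ i j, i < s.length → j < s.length →
    (s.getD i 0 < s.getD j 0 ↔ t.getD i 0 < t.getD j 0)

/-- `w` contains the pattern `p`: a subsequence of `w` is order-isomorphic to `p`. -/
def PatContains (w p : List ℕ) : Prop := ∃ s : List ℕ, s.Sublist w ∧ WordOrdIso s p

/-- `w` avoids the pattern `p`. -/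
def PatAvoids (w p : List ℕ) : Prop := ¬ PatContains w p

/-- `pCount n T` = number of RGFs of length `n` avoiding every pattern in `T`. -/
noncomputable def pCount (n : ℕ) (T : Set (List ℕ)) : ℕ :=
  {w : List ℕ | IsRGF w ∧ w.length = n ∧ ∀ p ∈ T, PatAvoids w p}.ncard

/-!
Both pattern pairs restrict a restricted growth function `1 :: v` in the same way: `12⋯(k+1)` is
avoided when no letter exceeds `k`, `12⋯2` when no letter `b ≥ 2` is used too often, and `121⋯1`
when no letter `a` is used too often after the first `a + 1`. Replacing each letter by its rotation
`1 ↦ m`, `x ↦ x - 1` of `1, …, m`, where `m` is the maximum reached before it, turns every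
occurrence of `a + 1` after the first into an `a`, and so matches the second condition with the
third.

For the count, let each letter `b` have its own budget. Reading a letter lowers one budget, or opens
a new letter, and on exponential generating functions removing the first letter is differentiation.
Truncations of the exponential series satisfy `(exp_{<n})' = exp_{<n-1}`, so the generating
functions are built from such truncations; for the words `v` above, when each letter `b ≥ 2` is used
at most `r` times, it is `exp · (exp_{<k} ∘ (exp_{<r+1} - 1))`.
-/

/-! ### Patterns in restricted growth functions -/

theorem wordOrdIso_iff_exists_strictMonoOn {s p : List ℕ} :
    WordOrdIso s p ↔ ∃ f : ℕ → ℕ, StrictMonoOn f {x | x ∈ p} ∧ s = p.map f := by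
  constructor
  · rintro ⟨hlen, hiso⟩
    have hidx {x : ℕ} (hx : x ∈ p) : p.idxOf x < s.length := hlen ▸ List.idxOf_lt_length_of_mem hx
    have hget {x : ℕ} (hx : x ∈ p) : p.getD (p.idxOf x) 0 = x := by
      rw [List.getD_eq_getElem _ _ (hlen ▸ hidx hx), List.getElem_idxOf]
    refine ⟨fun x => s.getD (p.idxOf x) 0, fun x hx y hy hxy => ?_, ?_⟩
    · rwa [hiso _ _ (hidx hx) (hidx hy), hget hx, hget hy]
    · refine List.ext_getElem (by simpa using hlen) fun i hi hi' => ?_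
      have hip : i < p.length := hlen ▸ hi
      have hmem : p[i] ∈ p := List.getElem_mem hip
      have hlt := hiso i _ hi (hidx hmem)
      have hgt := hiso _ i (hidx hmem) hi
      rw [hget hmem, List.getD_eq_getElem _ _ hip, List.getD_eq_getElem _ _ hi] at hlt hgt
      rw [List.getElem_map]
      omega
  · rintro ⟨f, hf, rfl⟩
    refine ⟨by simp, fun i j hi hj => ?_⟩
    rw [List.length_map] at hi hj
    simp only [List.getD_eq_getElem, List.length_map, hi, hj, List.getElem_map]
    exact hf.lt_iff_lt (List.getElem_mem hi) (List.getElem_mem hj)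

theorem patContains_iff_exists_strictMonoOn {w p : List ℕ} :
    PatContains w p ↔ ∃ f : ℕ → ℕ, StrictMonoOn f {x | x ∈ p} ∧ (p.map f).Sublist w := by
  simp only [PatContains, wordOrdIso_iff_exists_strictMonoOn]
  grind

theorem patContains_one_replicate_two_iff {w : List ℕ} (r : ℕ) :
    PatContains w (1 :: List.replicate (r + 1) 2) ↔
      ∃ a b, a < b ∧ (a :: List.replicate (r + 1) b).Sublist w := by
  rw [patContains_iff_exists_strictMonoOn]
  constructor
  · rintro ⟨f, hf, hw⟩
    exact ⟨f 1, f 2, hf (by simp) (by simp) one_lt_two, by simpa using hw⟩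
  · rintro ⟨a, b, hab, hw⟩
    refine ⟨fun x => if x = 1 then a else b, fun x hx y hy hxy => ?_, by simpa using hw⟩
    simp only [Set.mem_ofPred_eq, List.mem_cons, List.mem_replicate] at hx hy
    grind

theorem patContains_one_two_replicate_one_iff {w : List ℕ} (r : ℕ) :
    PatContains w (1 :: 2 :: List.replicate r 1) ↔
      ∃ a b, a < b ∧ (a :: b :: List.replicate r a).Sublist w := by
  rw [patContains_iff_exists_strictMonoOn]
  constructor
  · rintro ⟨f, hf, hw⟩
    exact ⟨f 1, f 2, hf (by simp) (by simp) one_lt_two, by simpa using hw⟩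
  · rintro ⟨a, b, hab, hw⟩
    refine ⟨fun x => if x = 1 then a else b, fun x hx y hy hxy => ?_, by simpa using hw⟩
    simp only [Set.mem_ofPred_eq, List.mem_cons, List.mem_replicate] at hx hy
    grind

/-- `IsRGFFrom m v` says that the word `v` continues a restricted growth function whose maximum so
far is `m`; it is what remains of `IsRGF` once a prefix has been read. -/
def IsRGFFrom : ℕ → List ℕ → Prop
  | _, [] => True
  | m, x :: v => 1 ≤ x ∧ x ≤ m + 1 ∧ IsRGFFrom (max m x) v

theorem isRGFFrom_iff {m : ℕ} {v : List ℕ} :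
    IsRGFFrom m v ↔ (∀ x ∈ v, 1 ≤ x) ∧
      ∀ i < v.length, v.getD i 0 ≤ max m ((v.take i).foldr max 0) + 1 := by
  induction v generalizing m with
  | nil => simp [IsRGFFrom]
  | cons x v ih =>
    rw [List.length_cons, Nat.forall_lt_succ_left']
    simp only [IsRGFFrom, ih, List.forall_mem_cons, List.getD_cons_zero, List.getD_cons_succ,
      List.take_zero, List.take_succ_cons, List.foldr_nil, List.foldr_cons, max_assoc]
    grind

theorem isRGF_cons_iff {a : ℕ} {v : List ℕ} : IsRGF (a :: v) ↔ a = 1 ∧ IsRGFFrom 1 v := by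
  simp only [IsRGF, isRGFFrom_iff, List.forall_mem_cons, List.length_cons, Nat.succ_lt_succ_iff,
    List.getD_cons_zero, List.getD_cons_succ, List.take_succ_cons, List.foldr_cons]
  grind

namespace IsRGFFrom

variable {m : ℕ} {v : List ℕ}

theorem one_le_of_mem (hv : IsRGFFrom m v) {x : ℕ} (hx : x ∈ v) : 1 ≤ x :=
  (isRGFFrom_iff.mp hv).1 x hx

theorem cons_sublist (hv : IsRGFFrom m v) {a b : ℕ} {u : List ℕ} (hma : m < a) (hab : a < b)
    (hbu : (b :: u).Sublist v) : (a :: b :: u).Sublist v := by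
  induction v generalizing m with
  | nil => simp at hbu
  | cons x v ih =>
    obtain ⟨-, hxm, hv⟩ := hv
    have hbu : (b :: u).Sublist v := by
      rcases List.cons_sublist_cons'.mp hbu with h | ⟨rfl, -⟩
      · exact h
      · omega
    by_cases hxa : x = a
    · exact hxa ▸ hbu.cons_cons x
    · exact (ih hv (by omega) hbu).cons x

theorem range'_sublist (hv : IsRGFFrom m v) {a i : ℕ} (hma : m < a) (hi : a + i ∈ v) :
    (List.range' a (i + 1)).Sublist v := by
  induction i generalizing a with
  | zero => simpa using hi
  | succ i ih =>
    have htail := ih (a := a + 1) (by omega) (by rwa [add_right_comm])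
    rw [List.range'_succ] at htail
    rw [List.range'_succ, List.range'_succ]
    exact hv.cons_sublist hma a.lt_succ_self htail

theorem patContains_range'_iff (hv : IsRGFFrom 1 v) (k : ℕ) :
    PatContains (1 :: v) (List.range' 1 (k + 1)) ↔ ∃ x ∈ 1 :: v, k < x := by
  have hw : IsRGFFrom 0 (1 :: v) := ⟨le_rfl, le_rfl, hv⟩
  rw [patContains_iff_exists_strictMonoOn]
  constructor
  · rintro ⟨f, hf, hfw⟩
    have hmem {i : ℕ} (hi : i ≤ k) : i + 1 ∈ List.range' 1 (k + 1) := by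
      rw [List.mem_range'_1]
      omega
    have hfmem {i : ℕ} (hi : i ≤ k) : f (i + 1) ∈ 1 :: v :=
      hfw.subset (List.mem_map_of_mem (hmem hi))
    have hlt : ∀ i ≤ k, i < f (i + 1) := by
      intro i hi
      induction i with
      | zero => exact hw.one_le_of_mem (hfmem hi)
      | succ i ih =>
        have hi' : i ≤ k := by omega
        have := ih hi'
        have := hf (hmem hi') (hmem hi) (Nat.lt_succ_self _)
        omega
    exact ⟨f (k + 1), hfmem le_rfl, hlt k le_rfl⟩
  · rintro ⟨x, hx, hkx⟩
    obtain ⟨i, rfl⟩ := Nat.exists_eq_add_of_le (show 1 ≤ x by omega)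
    refine ⟨id, strictMono_id.strictMonoOn _, ?_⟩
    rw [List.map_id]
    exact (List.range'_sublist_right.mpr (by omega)).trans (hw.range'_sublist one_pos hx)

theorem patContains_one_replicate_two_iff (hv : IsRGFFrom 1 v) (r : ℕ) :
    PatContains (1 :: v) (1 :: List.replicate (r + 1) 2) ↔
      ∃ a ≥ 1, (List.replicate (r + 1) (a + 1)).Sublist v := by
  rw [_root_.patContains_one_replicate_two_iff]
  constructor
  · rintro ⟨a, b, hab, hw⟩
    have ha := List.mem_cons.mp (hw.subset (List.mem_cons_self ..))
    have ha : 1 ≤ a := ha.elim Eq.ge hv.one_le_of_mem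
    refine ⟨b - 1, by omega, ?_⟩
    rw [Nat.sub_add_cancel (by omega)]
    exact hw.tail
  · rintro ⟨a, ha, hw⟩
    exact ⟨1, a + 1, by omega, hw.cons_cons 1⟩

theorem patContains_one_two_replicate_one_iff (hv : IsRGFFrom 1 v) (r : ℕ) :
    PatContains (1 :: v) (1 :: 2 :: List.replicate r 1) ↔
      ∃ a ≥ 1, ((a + 1) :: List.replicate r a).Sublist v := by
  rw [_root_.patContains_one_two_replicate_one_iff]
  constructor
  · rintro ⟨a, b, hab, hw⟩
    have ha := List.mem_cons.mp (hw.subset (List.mem_cons_self ..))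
    have ha : 1 ≤ a := ha.elim Eq.ge hv.one_le_of_mem
    have hbv := hw.tail
    refine ⟨a, ha, ?_⟩
    obtain rfl | hb := Nat.eq_or_lt_of_le hab
    · exact hbv
    · exact ((List.sublist_cons_self ..).cons_cons _).trans
        (hv.cons_sublist (a := a + 1) (by omega) hb hbv)
  · rintro ⟨a, ha, hv'⟩
    refine ⟨a, a + 1, by omega, ?_⟩
    obtain rfl | ha := Nat.eq_or_lt_of_le ha
    · exact hv'.cons_cons 1
    · exact (hv.cons_sublist ha (by omega) hv').cons 1

end IsRGFFrom

/-! ### The rotation bijection -/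

/-- The cyclic permutation `1 ↦ m`, `x ↦ x - 1` (`2 ≤ x ≤ m`) of the letters `1, …, m`, extended by
the identity; the identity when `m = 0`. -/
def rotate (m : ℕ) : Equiv.Perm ℕ where
  toFun x := if 1 ≤ x ∧ x ≤ m then if x = 1 then m else x - 1 else x
  invFun x := if 1 ≤ x ∧ x ≤ m then if x = m then 1 else x + 1 else x
  left_inv x := by grind
  right_inv x := by grind

theorem max_rotate (m x : ℕ) : max m (rotate m x) = max m x := by
  simp only [rotate, Equiv.coe_fn_mk]
  grind

theorem one_le_rotate_iff {m x : ℕ} : 1 ≤ rotate m x ↔ 1 ≤ x := by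
  simp only [rotate, Equiv.coe_fn_mk]
  grind

theorem rotate_eq_iff_of_lt {m a x : ℕ} (ha : 1 ≤ a) (ham : a < m) :
    rotate m x = a ↔ x = a + 1 := by
  simp only [rotate, Equiv.coe_fn_mk]
  grind

theorem rotate_eq_iff_of_gt {m a x : ℕ} (hma : m < a) : rotate m x = a ↔ x = a := by
  simp only [rotate, Equiv.coe_fn_mk]
  grind

/-- Applies to each letter of a word the rotation by the maximum of `m` and the letters before it.
On words that continue a restricted growth function of maximum `m`, this is the bijection that
exchanges the patterns `12⋯2` and `121⋯1`. -/
def relabel : ℕ → List ℕ → List ℕ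
  | _, [] => []
  | m, x :: v => rotate m x :: relabel (max m x) v

theorem length_relabel (m : ℕ) (v : List ℕ) : (relabel m v).length = v.length := by
  induction v generalizing m with
  | nil => rfl
  | cons x v ih => simp [relabel, ih]

theorem relabel_injective (m : ℕ) : Function.Injective (relabel m) := by
  intro u v huv
  induction u generalizing m v with
  | nil => cases v <;> simp_all [relabel]
  | cons x u ih =>
    cases v with
    | nil => simp [relabel] at huv
    | cons y v =>
      obtain ⟨hxy, huv⟩ := List.cons_eq_cons.mp huv
      obtain rfl := (rotate m).injective hxy
      rw [ih _ huv]

theorem relabel_surjective (m : ℕ) : Function.Surjective (relabel m) := by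
  intro v
  induction v generalizing m with
  | nil => exact ⟨[], rfl⟩
  | cons y v ih =>
    obtain ⟨x, rfl⟩ := (rotate m).surjective y
    obtain ⟨u, rfl⟩ := ih (max m x)
    exact ⟨x :: u, rfl⟩

theorem isRGFFrom_relabel_iff {m : ℕ} {v : List ℕ} :
    IsRGFFrom m (relabel m v) ↔ IsRGFFrom m v := by
  induction v generalizing m with
  | nil => rfl
  | cons x v ih =>
    have := max_rotate m x
    simp only [relabel, IsRGFFrom, this, ih, one_le_rotate_iff]
    grind

theorem exists_gt_mem_relabel_iff {m k : ℕ} {v : List ℕ} :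
    (∃ x ∈ m :: relabel m v, k < x) ↔ ∃ x ∈ m :: v, k < x := by
  induction v generalizing m with
  | nil => rfl
  | cons x v ih =>
    have := max_rotate m x
    have := ih (m := max m x)
    simp only [relabel, List.exists_mem_cons_iff] at *
    grind

theorem count_relabel {m a : ℕ} (ha : 1 ≤ a) (ham : a < m) (v : List ℕ) :
    (relabel m v).count a = v.count (a + 1) := by
  induction v generalizing m with
  | nil => rfl
  | cons x v ih =>
    simp only [relabel, List.count_cons, ih (ham.trans_le (le_max_left m x)), beq_iff_eq,
      rotate_eq_iff_of_lt ha ham]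

theorem IsRGFFrom.cons_replicate_sublist_relabel_iff {m a : ℕ} {v : List ℕ} (hv : IsRGFFrom m v)
    (ha : 1 ≤ a) (hma : m ≤ a) (r : ℕ) :
    ((a + 1) :: List.replicate r a).Sublist (relabel m v) ↔
      (List.replicate (r + 1) (a + 1)).Sublist v := by
  induction v generalizing m with
  | nil => simp [relabel, List.replicate_succ]
  | cons x v ih =>
    obtain ⟨-, hxm, hv⟩ := hv
    have hrot : rotate m x = a + 1 ↔ x = a + 1 := rotate_eq_iff_of_gt (by omega)
    rw [List.replicate_succ, relabel]
    by_cases hx : x = a + 1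
    · have hmax : max m x = a + 1 := by omega
      rw [hrot.mpr hx, hmax, hx, List.cons_sublist_cons, List.cons_sublist_cons,
        List.replicate_sublist_iff, List.replicate_sublist_iff, count_relabel ha a.lt_succ_self]
    · rw [List.cons_sublist_cons', List.cons_sublist_cons', ← List.replicate_succ,
        ih hv (by omega)]
      simp only [eq_comm (a := a + 1), hrot, hx, false_and, or_false]

theorem IsRGFFrom.patContains_relabel_iff {v : List ℕ} (hv : IsRGFFrom 1 v) (r : ℕ) :
    PatContains (1 :: relabel 1 v) (1 :: 2 :: List.replicate r 1) ↔
      PatContains (1 :: v) (1 :: List.replicate (r + 1) 2) := by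
  rw [(isRGFFrom_relabel_iff.mpr hv).patContains_one_two_replicate_one_iff,
    hv.patContains_one_replicate_two_iff]
  exact exists_congr fun a => and_congr_right fun ha =>
    hv.cons_replicate_sublist_relabel_iff ha ha r

theorem pCount_succ (n : ℕ) (T : Set (List ℕ)) :
    pCount (n + 1) T =
      {v | v.length = n ∧ IsRGFFrom 1 v ∧ ∀ p ∈ T, PatAvoids (1 :: v) p}.ncard := by
  refine ((congrArg Set.ncard ?_).trans (Set.ncard_preimage_of_injective_subset_range
    (List.cons_injective (a := 1)) ?_)).symm
  · ext v
    simp only [Set.mem_ofPred_eq, Set.mem_preimage, isRGF_cons_iff, List.length_cons,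
      Nat.add_right_cancel_iff, true_and]
    exact and_left_comm
  · rintro w ⟨hw, hlen, -⟩
    obtain ⟨a, v, rfl⟩ := List.exists_cons_of_length_eq_add_one hlen
    obtain ⟨rfl, -⟩ := isRGF_cons_iff.mp hw
    exact ⟨v, rfl⟩

theorem pCount_succ_one_replicate_two_eq (r k n : ℕ) :
    pCount (n + 1) {1 :: List.replicate (r + 1) 2, List.range' 1 (k + 1)} =
      pCount (n + 1) {1 :: 2 :: List.replicate r 1, List.range' 1 (k + 1)} := by
  rw [pCount_succ, pCount_succ]
  refine (congrArg Set.ncard ?_).trans (Set.ncard_preimage_of_injective_subset_range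
    (relabel_injective 1) (by simp [(relabel_surjective 1).range_eq]))
  ext v
  simp only [Set.mem_preimage, Set.mem_ofPred_eq, length_relabel, isRGFFrom_relabel_iff,
    Set.mem_insert_iff, Set.mem_singleton_iff, forall_eq_or_imp, forall_eq, PatAvoids]
  refine and_congr_right fun _ => and_congr_right fun hv => ?_
  rw [hv.patContains_relabel_iff, hv.patContains_range'_iff,
    (isRGFFrom_relabel_iff.mpr hv).patContains_range'_iff, exists_gt_mem_relabel_iff]

/-! ### Counting words under letter budgets -/

theorem ncard_eq_sum_ncard_preimage_cons {α : Type*} {S : Set (List α)} (hS : S.Finite)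
    {A : Finset α} (hA : ∀ w ∈ S, ∃ a ∈ A, ∃ v, w = a :: v) :
    S.ncard = ∑ a ∈ A, (List.cons a ⁻¹' S).ncard := by
  have hsub (a : α) : List.cons a '' (List.cons a ⁻¹' S) ⊆ S := Set.image_preimage_subset _ _
  have hunion : S = ⋃ a ∈ (A : Set α), List.cons a '' (List.cons a ⁻¹' S) := by
    refine (Set.iUnion₂_subset fun a _ => hsub a).antisymm' fun w hw => ?_
    obtain ⟨a, ha, v, rfl⟩ := hA w hw
    exact Set.mem_biUnion ha ⟨v, hw, rfl⟩
  have hdisj : (A : Set α).PairwiseDisjoint fun a => List.cons a '' (List.cons a ⁻¹' S) := by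
    intro a _ b _ hab
    rw [Function.onFun, Set.disjoint_left]
    rintro _ ⟨u, -, rfl⟩ ⟨v, -, huv⟩
    exact hab (List.cons_eq_cons.mp huv).1.symm
  conv_lhs => rw [hunion]
  rw [A.finite_toSet.ncard_biUnion (fun a _ => hS.subset (hsub a)) hdisj,
    finsum_mem_coe_finset]
  exact Finset.sum_congr rfl fun a _ => Set.ncard_image_of_injective _ List.cons_injective

theorem finite_setOf_length_eq_forall_mem_le (n k : ℕ) :
    {v : List ℕ | v.length = n ∧ ∀ x ∈ v, x ≤ k}.Finite := by
  refine ((List.finite_length_eq (Fin (k + 1)) n).image (List.map Fin.val)).subset ?_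
  rintro v ⟨hlen, hle⟩
  lift v to List (Fin (k + 1)) using fun x hx => Nat.lt_succ_of_le (hle x hx)
  exact ⟨v, by simpa using hlen, rfl⟩

/-- The words of length `n` that continue a restricted growth function of maximum `m`, never exceed
`k`, and use each letter `b ≥ 2` fewer than `c b` times. The budgets vary with `b` so that the
family is closed under removing the first letter. -/
def budgetWords (k m : ℕ) (c : ℕ → ℕ) (n : ℕ) : Set (List ℕ) :=
  {v | v.length = n ∧ IsRGFFrom m v ∧ (∀ x ∈ m :: v, x ≤ k) ∧ ∀ b ≥ 2, v.count b < c b}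

theorem finite_budgetWords (k m : ℕ) (c : ℕ → ℕ) (n : ℕ) : (budgetWords k m c n).Finite :=
  (finite_setOf_length_eq_forall_mem_le n k).subset fun _ ⟨hlen, _, hle, _⟩ =>
    ⟨hlen, fun x hx => hle x (List.mem_cons_of_mem _ hx)⟩

theorem preimage_cons_budgetWords (k : ℕ) {m a : ℕ} (c : ℕ → ℕ) (n : ℕ) (ha : 1 ≤ a)
    (ham : a ≤ m + 1) :
    List.cons a ⁻¹' budgetWords k m c (n + 1) =
      budgetWords k (max m a) (Function.update c a (c a - 1)) n := by
  have hcount (v : List ℕ) (b : ℕ) :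
      (a :: v).count b < c b ↔ v.count b < Function.update c a (c a - 1) b := by
    obtain rfl | hab := eq_or_ne a b
    · rw [List.count_cons_self, Function.update_self, Nat.lt_sub_iff_add_lt]
    · rw [List.count_cons_of_ne hab, Function.update_of_ne hab.symm]
  ext v
  simp only [budgetWords, Set.mem_preimage, Set.mem_ofPred_eq, List.length_cons, hcount,
    List.forall_mem_cons, max_le_iff, IsRGFFrom, ha, ham, true_and, Nat.add_right_cancel_iff,
    and_assoc]

theorem ncard_budgetWords_succ (k m : ℕ) (c : ℕ → ℕ) (n : ℕ) :
    (budgetWords k m c (n + 1)).ncard = ∑ a ∈ Finset.Icc 1 (m + 1),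
      (budgetWords k (max m a) (Function.update c a (c a - 1)) n).ncard := by
  rw [ncard_eq_sum_ncard_preimage_cons (finite_budgetWords ..) (A := Finset.Icc 1 (m + 1))]
  · refine Finset.sum_congr rfl fun a ha => ?_
    obtain ⟨ha, ham⟩ := Finset.mem_Icc.mp ha
    rw [preimage_cons_budgetWords k c n ha ham]
  · rintro w ⟨hlen, hw, -⟩
    obtain ⟨a, v, rfl⟩ := List.exists_cons_of_length_eq_add_one hlen
    exact ⟨a, Finset.mem_Icc.mpr ⟨hw.1, hw.2.1⟩, v, rfl⟩

theorem ncard_budgetWords_zero {k m : ℕ} {c : ℕ → ℕ} (hc : ∀ b > m, 0 < c b) :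
    (budgetWords k m c 0).ncard =
      (∏ b ∈ Finset.Icc 2 m, if 0 < c b then 1 else 0) * if m ≤ k then 1 else 0 := by
  have hmem (v : List ℕ) :
      v ∈ budgetWords k m c 0 ↔ v = [] ∧ m ≤ k ∧ ∀ b ∈ Finset.Icc 2 m, 0 < c b := by
    simp only [budgetWords, Set.mem_ofPred_eq, List.length_eq_zero_iff, Finset.mem_Icc]
    refine and_congr_right ?_
    rintro rfl
    simp only [IsRGFFrom, true_and, List.forall_mem_singleton, List.count_nil]
    grind
  rw [Finset.prod_ite_zero, Finset.prod_const_one]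
  by_cases h : m ≤ k ∧ ∀ b ∈ Finset.Icc 2 m, 0 < c b
  · have hsingleton : budgetWords k m c 0 = {[]} :=
      Set.ext fun v => (hmem v).trans (and_iff_left h)
    rw [hsingleton, Set.ncard_singleton, if_pos h.2, if_pos h.1, mul_one]
  · have hempty : budgetWords k m c 0 = ∅ :=
      Set.eq_empty_of_forall_notMem fun v hv => h ((hmem v).mp hv).2
    rw [hempty, Set.ncard_empty]
    grind

theorem pCount_succ_one_replicate_two_eq_ncard_budgetWords (r k n : ℕ) :
    pCount (n + 1) {1 :: List.replicate (r + 1) 2, List.range' 1 (k + 1)} =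
      (budgetWords k 1 (fun _ => r + 1) n).ncard := by
  rw [pCount_succ]
  congr 1
  ext v
  simp only [budgetWords, Set.mem_ofPred_eq, Set.mem_insert_iff, Set.mem_singleton_iff,
    forall_eq_or_imp, forall_eq, PatAvoids]
  refine and_congr_right fun _ => and_congr_right fun hv => ?_
  have hshift : (∀ b ≥ 2, v.count b < r + 1) ↔ ∀ a ≥ 1, v.count (a + 1) < r + 1 := by
    refine ⟨fun h a ha => h _ (Nat.succ_le_succ ha), fun h b hb => ?_⟩
    obtain ⟨a, rfl⟩ := Nat.exists_eq_add_of_le' hb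
    exact h (a + 1) (Nat.le_add_left 1 a)
  rw [hv.patContains_one_replicate_two_iff, hv.patContains_range'_iff, hshift, and_comm]
  push Not
  simp only [List.replicate_sublist_iff, not_le]

/-! ### Exponential generating functions -/

open PowerSeries
open scoped Polynomial Nat

/-- The sum of the first `n` terms of the exponential series; this is the exponential generating
function of the uses of one letter with budget `n`. -/
noncomputable def truncExp (n : ℕ) : ℚ[X] := trunc n (exp ℚ)

theorem derivative_truncExp (n : ℕ) : (truncExp n).derivative = truncExp (n - 1) := by
  rw [truncExp, ← trunc_derivative', derivative_exp, truncExp]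

theorem eval_zero_truncExp (n : ℕ) : (truncExp n).eval 0 = if 0 < n then 1 else 0 := by
  rw [truncExp, ← Polynomial.coeff_zero_eq_eval_zero, coeff_trunc, coeff_exp]
  simp

/-- `exp` times this polynomial is the exponential generating function of the sets
`budgetWords k m c n`, provided that `1 ≤ m` and `c b = r + 1` for all `b > m`. The factor `exp`
accounts for the letter `1` and the product for the letters `2, …, m`; the last factor accounts for
the letters still to appear, at most `k - m` of them. If `m > k` the truncated subtraction makes it
`0`. -/
noncomputable def budgetPoly (k r m : ℕ) (c : ℕ → ℕ) : ℚ[X] :=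
  (∏ b ∈ Finset.Icc 2 m, truncExp (c b)) * (truncExp (k + 1 - m)).comp (truncExp (r + 1) - 1)

theorem eval_zero_budgetPoly (k r m : ℕ) (c : ℕ → ℕ) :
    (budgetPoly k r m c).eval 0 =
      (∏ b ∈ Finset.Icc 2 m, if 0 < c b then 1 else 0) * if m ≤ k then 1 else 0 := by
  have hinner : (truncExp (r + 1) - 1).eval 0 = 0 := by
    rw [Polynomial.eval_sub, eval_zero_truncExp, if_pos r.succ_pos, Polynomial.eval_one, sub_self]
  have hmk : 0 < k + 1 - m ↔ m ≤ k := by omega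
  simp only [budgetPoly, Polynomial.eval_mul, Polynomial.eval_prod, Polynomial.eval_comp,
    hinner, eval_zero_truncExp, hmk]

theorem prod_comp_update_of_notMem {ι α M : Type*} [DecidableEq ι] [CommMonoid M] {s : Finset ι}
    {a : ι} (ha : a ∉ s) (c : ι → α) (i : α) (g : α → M) :
    ∏ b ∈ s, g (Function.update c a i b) = ∏ b ∈ s, g (c b) :=
  Finset.prod_congr rfl fun _ hb => by rw [Function.update_of_ne (ne_of_mem_of_not_mem hb ha)]

theorem derivative_prod_truncExp {ι : Type*} [DecidableEq ι] (c : ι → ℕ) (s : Finset ι) :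
    (∏ b ∈ s, truncExp (c b)).derivative =
      ∑ a ∈ s, ∏ b ∈ s, truncExp (Function.update c a (c a - 1) b) := by
  rw [Polynomial.derivative_prod_finset]
  refine Finset.sum_congr rfl fun a ha => ?_
  rw [derivative_truncExp, ← Finset.prod_erase_mul s _ ha, Function.update_self,
    prod_comp_update_of_notMem (Finset.notMem_erase a s)]

theorem budgetPoly_add_derivative {k r m : ℕ} {c : ℕ → ℕ} (hm : 1 ≤ m)
    (hc : c (m + 1) = r + 1) :
    budgetPoly k r m c + (budgetPoly k r m c).derivative = ∑ a ∈ Finset.Icc 1 (m + 1),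
      budgetPoly k r (max m a) (Function.update c a (c a - 1)) := by
  have hone : budgetPoly k r (max m 1) (Function.update c 1 (c 1 - 1)) = budgetPoly k r m c := by
    rw [max_eq_left hm, budgetPoly, budgetPoly, prod_comp_update_of_notMem (by simp)]
  have hold : ∀ a ∈ Finset.Icc (1 + 1) m,
      budgetPoly k r (max m a) (Function.update c a (c a - 1)) =
        (∏ b ∈ Finset.Icc 2 m, truncExp (Function.update c a (c a - 1) b)) *
          (truncExp (k + 1 - m)).comp (truncExp (r + 1) - 1) := fun a ha => by
    rw [max_eq_left (Finset.mem_Icc.mp ha).2, budgetPoly]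
  have hnew : budgetPoly k r (max m (m + 1)) (Function.update c (m + 1) (c (m + 1) - 1)) =
      (∏ b ∈ Finset.Icc 2 m, truncExp (c b)) *
        (truncExp r * (truncExp (k + 1 - m - 1)).comp (truncExp (r + 1) - 1)) := by
    rw [max_eq_right m.le_succ, budgetPoly, Finset.prod_Icc_succ_top (by omega),
      Function.update_self, prod_comp_update_of_notMem (by simp), hc, Nat.add_sub_cancel,
      mul_assoc, Nat.sub_sub]
  rw [Finset.sum_Icc_succ_top (by omega), ← Finset.insert_Icc_add_one_left_eq_Icc hm,
    Finset.sum_insert (by simp), hone, Finset.sum_congr rfl hold, hnew, ← Finset.sum_mul,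
    ← derivative_prod_truncExp, add_assoc]
  congr 1
  rw [budgetPoly, Polynomial.derivative_mul, Polynomial.derivative_comp, derivative_truncExp,
    Polynomial.derivative_sub, derivative_truncExp, Polynomial.derivative_one, sub_zero,
    Nat.add_sub_cancel]

theorem derivative_exp_mul_coe {A : Type*} [CommRing A] [Algebra ℚ A] (p : A[X]) :
    d⁄dX A (exp A * (p : A⟦X⟧)) = exp A * ((p + p.derivative : A[X]) : A⟦X⟧) := by
  rw [Derivation.leibniz, derivative_exp, derivative_coe, Polynomial.coe_add, smul_eq_mul,
    smul_eq_mul, mul_add, mul_comm (p : A⟦X⟧), add_comm]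

theorem coe_sum {ι R : Type*} [CommSemiring R] (s : Finset ι) (f : ι → R[X]) :
    ((∑ i ∈ s, f i : R[X]) : R⟦X⟧) = ∑ i ∈ s, (f i : R⟦X⟧) :=
  map_sum (Polynomial.coeToPowerSeries.ringHom (R := R)) f s

theorem ncard_budgetWords {k r m n : ℕ} {c : ℕ → ℕ} (hm : 1 ≤ m) (hc : ∀ b > m, c b = r + 1) :
    ((budgetWords k m c n).ncard : ℚ) =
      n ! * coeff n (exp ℚ * (budgetPoly k r m c : ℚ⟦X⟧)) := by
  induction n generalizing m c with
  | zero =>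
    have hpos : ∀ b > m, 0 < c b := fun b hb => hc b hb ▸ r.succ_pos
    rw [ncard_budgetWords_zero hpos, coeff_zero_eq_constantCoeff_apply, map_mul,
      constantCoeff_exp, Polynomial.constantCoeff_coe, Polynomial.coeff_zero_eq_eval_zero,
      eval_zero_budgetPoly]
    simp
  | succ n ih =>
    have hderiv := congrArg (coeff n) (derivative_exp_mul_coe (budgetPoly k r m c))
    rw [coeff_derivative, budgetPoly_add_derivative hm (hc _ m.lt_succ_self)] at hderiv
    have hih : ∀ a ∈ Finset.Icc 1 (m + 1),
        ((budgetWords k (max m a) (Function.update c a (c a - 1)) n).ncard : ℚ) =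
          n ! * coeff n
            (exp ℚ * (budgetPoly k r (max m a) (Function.update c a (c a - 1)) : ℚ⟦X⟧)) := by
      refine fun a _ => ih (hm.trans (le_max_left m a)) fun b hb => ?_
      obtain ⟨hmb, hab⟩ := max_lt_iff.mp hb
      rw [Function.update_of_ne hab.ne', hc b hmb]
    rw [ncard_budgetWords_succ, Nat.cast_sum, Finset.sum_congr rfl hih, ← Finset.mul_sum,
      ← map_sum, ← Finset.mul_sum, Nat.factorial_succ, ← coe_sum, ← hderiv]
    push_cast
    ring

theorem truncExp_three :
    truncExp 3 = 1 + Polynomial.X + Polynomial.C (1 / 2) * Polynomial.X ^ 2 := by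
  simp [truncExp, trunc_succ, coeff_exp, ← Polynomial.C_mul_X_pow_eq_monomial]

theorem truncExp_three_comp_truncExp_three_sub_one :
    (truncExp 3).comp (truncExp 3 - 1) =
      1 + Polynomial.X + Polynomial.X ^ 2 + Polynomial.C (1 / 2) * Polynomial.X ^ 3 +
        Polynomial.C (1 / 8) * Polynomial.X ^ 4 := by
  have hhalf : 2 * Polynomial.C (1 / 2 : ℚ) = 1 := by
    rw [← Polynomial.C_ofNat, ← Polynomial.C_mul, mul_one_div_cancel two_ne_zero, Polynomial.C_1]
  have heighth : Polynomial.C (1 / 8 : ℚ) = Polynomial.C (1 / 2) ^ 3 := by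
    rw [← Polynomial.C_pow]
    norm_num
  rw [truncExp_three, heighth]
  simp only [Polynomial.add_comp, Polynomial.mul_comp, Polynomial.one_comp, Polynomial.C_comp,
    Polynomial.X_comp, Polynomial.X_pow_comp]
  linear_combination
    (Polynomial.X ^ 2 + Polynomial.C (1 / 2 : ℚ) * Polynomial.X ^ 3) * hhalf

theorem factorial_mul_coeff_exp_mul_X_pow (n i : ℕ) :
    n ! * coeff n (exp ℚ * X ^ i) = (descPochhammer ℚ i).eval (n : ℚ) := by
  rw [coeff_mul_X_pow', descPochhammer_eval_eq_descFactorial]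
  split_ifs with hin
  · rw [coeff_exp, Algebra.algebraMap_self_apply, mul_one_div, Nat.descFactorial_eq_div hin,
      Nat.cast_div (Nat.factorial_dvd_factorial (Nat.sub_le n i)) (by positivity)]
  · rw [mul_zero, Nat.descFactorial_of_lt (not_le.mp hin), Nat.cast_zero]

theorem factorial_mul_coeff_exp_mul_truncExp_three_comp (n : ℕ) :
    n ! * coeff n (exp ℚ * ((truncExp 3).comp (truncExp 3 - 1) : ℚ⟦X⟧)) =
      1 + (n : ℚ) + n * (n - 1) + n * (n - 1) * (n - 2) / 2 +
        n * (n - 1) * (n - 2) * (n - 3) / 8 := by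
  have hexpand : exp ℚ * ((truncExp 3).comp (truncExp 3 - 1) : ℚ⟦X⟧) =
      exp ℚ * X ^ 0 + exp ℚ * X ^ 1 + exp ℚ * X ^ 2 + C (1 / 2) * (exp ℚ * X ^ 3) +
        C (1 / 8) * (exp ℚ * X ^ 4) := by
    rw [truncExp_three_comp_truncExp_three_sub_one]
    simp only [Polynomial.coe_add, Polynomial.coe_mul, Polynomial.coe_one, Polynomial.coe_X,
      Polynomial.coe_pow, Polynomial.coe_C]
    ring
  rw [hexpand]
  simp only [map_add, coeff_C_mul, mul_add, mul_left_comm (n ! : ℚ),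
    factorial_mul_coeff_exp_mul_X_pow, descPochhammer_succ_right, descPochhammer_zero,
    Polynomial.eval_mul, Polynomial.eval_sub, Polynomial.eval_one, Polynomial.eval_X,
    Polynomial.eval_natCast]
  push_cast
  ring

theorem stmt17_general (r k n : ℕ) :
    pCount (n + 1) {1 :: List.replicate (r + 1) 2, List.range' 1 (k + 1)} =
        pCount (n + 1) {1 :: 2 :: List.replicate r 1, List.range' 1 (k + 1)} ∧
      (pCount (n + 1) {1 :: List.replicate (r + 1) 2, List.range' 1 (k + 1)} : ℚ) =
        n ! * coeff n (exp ℚ * ((truncExp k).comp (truncExp (r + 1) - 1) : ℚ⟦X⟧)) := by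
  refine ⟨pCount_succ_one_replicate_two_eq r k n, ?_⟩
  rw [pCount_succ_one_replicate_two_eq_ncard_budgetWords,
    ncard_budgetWords le_rfl fun _ _ => rfl, budgetPoly, Finset.Icc_eq_empty (by omega),
    Finset.prod_empty, one_mul, Nat.add_sub_cancel]

/-- Corollary 4.13: `p_n(1222,1234) = p_n(1211,1234) = (n⁴-6n³+19n²-22n+16)/8`. -/
theorem stmt17 :
    ∀ n : ℕ, 1 ≤ n →
      pCount n {[1,2,2,2], [1,2,3,4]} = pCount n {[1,2,1,1], [1,2,3,4]} ∧
      (8 * pCount n {[1,2,2,2], [1,2,3,4]} : ℤ)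
        = (n : ℤ) ^ 4 - 6 * (n : ℤ) ^ 3 + 19 * (n : ℤ) ^ 2 - 22 * (n : ℤ) + 16 := by
  intro n hn
  obtain ⟨N, rfl⟩ := Nat.exists_eq_add_of_le' hn
  obtain ⟨heq, hcount⟩ := stmt17_general 2 3 N
  refine ⟨heq, ?_⟩
  have hcount : (pCount (N + 1) {[1,2,2,2], [1,2,3,4]} : ℚ) = _ :=
    hcount.trans (factorial_mul_coeff_exp_mul_truncExp_three_comp N)
  qify
  rw [hcount]
  ring
end

section
/- For every n, p_n(1123, 1211) = p_n(1123, 1222); that is, the pattern pairs (1123, 1211) and (1123, 1222) are Wilf-equivalent. -/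
/-!
A restricted growth function avoiding `1123` with largest letter `k + 2` is `1 2 ⋯ (k+1)` followed
by a `123`-avoiding tail over `1, …, k + 2` that contains `k + 2`. Avoiding `1211` means that the
letters up to `k` occur at most once in the tail and `k + 1` at most once after the first `k + 2`;
avoiding `1222` means that the letters `2, …, k + 1` occur at most once in the tail and `k + 2` at
most twice.

The rearrangements avoiding `123` of a multiset in which only the smallest letter (`x` times) and
the largest letter (`N` times) may be repeated are counted by the ballot number `B x s N`, where `s`
is the number of intermediate letters: inserting one more letter just below the largest one turns
the counts into `∑ B x s i` over `1 ≤ i ≤ N + 1`, which is `B x (s + 1) N`. Once it is fixed which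
of the non-repeatable letters occur in the tail, summing over the multiplicities of the other two
gives, for `1211` and for `1222`, two sums of ballot numbers that agree.
-/

open Finset
open scoped List

section BallotNumbers

/-- The ballot number counting the lattice paths of `x + N + 2 * s` steps `±1` from height `x` to
height `N` that stay nonnegative. The formula is the one given by the reflection principle; it is
stated in `ℤ` so that the difference is not truncated. -/
def ballotNumber (x s N : ℕ) : ℤ :=
  ((x + N + 2 * s).choose (x + s) : ℤ) - (x + N + 2 * s).choose (x + N + s + 1)

theorem ballotNumber_zero (x N : ℕ) : ballotNumber x 0 N = (x + N).choose x := by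
  simp [ballotNumber]

theorem ballotNumber_comm (x s N : ℕ) : ballotNumber x s N = ballotNumber N s x := by
  have hsymm : (x + N + 2 * s).choose (x + s) = (x + N + 2 * s).choose (N + s) :=
    Nat.choose_symm_of_eq_add (by ring)
  simp only [ballotNumber, hsymm, add_comm N x]

theorem ballotNumber_succ_zero (x s : ℕ) : ballotNumber x (s + 1) 0 = ballotNumber x s 1 := by
  have hsplit (j : ℕ) : (x + 0 + 2 * (s + 1)).choose (j + 1) =
      (x + 1 + 2 * s).choose j + (x + 1 + 2 * s).choose (j + 1) := by
    rw [← Nat.choose_succ_succ']; congr 1; ring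
  have h₁ := hsplit (x + s)
  have h₂ := hsplit (x + s + 1)
  simp only [ballotNumber, show x + (s + 1) = x + s + 1 by ring,
    show x + 0 + (s + 1) + 1 = x + s + 1 + 1 by ring, show x + 1 + s + 1 = x + s + 1 + 1 by ring]
  rw [h₁, h₂]
  push_cast
  ring

theorem ballotNumber_succ_succ (x s N : ℕ) :
    ballotNumber x (s + 1) (N + 1) = ballotNumber x (s + 1) N + ballotNumber x s (N + 2) := by
  have hsplit (j : ℕ) : (x + (N + 1) + 2 * (s + 1)).choose (j + 1) =
      (x + N + 2 * (s + 1)).choose j + (x + N + 2 * (s + 1)).choose (j + 1) := by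
    rw [← Nat.choose_succ_succ']; congr 1; ring
  have h₁ := hsplit (x + s)
  have h₂ := hsplit (x + N + s + 2)
  simp only [ballotNumber, show x + (N + 2) + 2 * s = x + N + 2 * (s + 1) by ring,
    show x + (s + 1) = x + s + 1 by ring,
    show x + (N + 1) + (s + 1) + 1 = x + N + s + 2 + 1 by ring,
    show x + N + (s + 1) + 1 = x + N + s + 2 by ring,
    show x + (N + 2) + s + 1 = x + N + s + 2 + 1 by ring]
  rw [h₁, h₂]
  push_cast
  ring

theorem ballotNumber_succ (x s N : ℕ) :
    ballotNumber x (s + 1) N = ∑ i ∈ range (N + 1), ballotNumber x s (i + 1) := by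
  induction N with
  | zero => simp [ballotNumber_succ_zero]
  | succ N ih => rw [sum_range_succ, ← ih, ballotNumber_succ_succ]

theorem ballotNumber_zero_succ (s N : ℕ) : ballotNumber 0 (s + 1) N = ballotNumber 1 s N := by
  rw [ballotNumber_comm, ballotNumber_succ_zero, ballotNumber_comm]

theorem ballotNumber_succ_left (x s N : ℕ) :
    ballotNumber (x + 1) (s + 1) N = ballotNumber x (s + 1) N + ballotNumber (x + 2) s N := by
  simpa only [ballotNumber_comm N] using ballotNumber_succ_succ N s x

theorem ballotNumber_add_sum (s L : ℕ) :
    ballotNumber 0 s (L + 2) + ∑ i ∈ range (L + 1), ballotNumber 0 (s + 1) (i + 1) =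
      ballotNumber (L + 1) s 1 + ballotNumber L s 2 := by
  have hone : ballotNumber (L + 1) s 1 = ballotNumber 0 (s + 1) (L + 1) := by
    rw [ballotNumber_comm, ballotNumber_zero_succ]
  have htwo : ballotNumber 0 (s + 2) L = ballotNumber 0 (s + 1) L + ballotNumber L s 2 := by
    rw [ballotNumber_zero_succ, ballotNumber_succ_left, ballotNumber_comm 2]
  rw [← ballotNumber_succ, htwo, hone, ballotNumber_succ_succ]
  ring

end BallotNumbers

section Avoiders

variable {α : Type*}

theorem finite_setOfPred_coe_eq (m : Multiset α) : {u : List α | (u : Multiset α) = m}.Finite := by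
  classical
  exact m.lists.finite_toSet.subset fun u hu => by simpa [Multiset.mem_lists_iff] using hu.symm

theorem setOfPred_coe_eq_replicate (x : ℕ) (b : α) :
    {u : List α | (u : Multiset α) = .replicate x b} = {List.replicate x b} := by
  ext u
  rw [Set.mem_ofPred_eq, ← Multiset.coe_replicate, Multiset.coe_eq_coe, List.perm_replicate,
    Set.mem_singleton_iff]

theorem setOfPred_coe_eq_replicate_succ_add_replicate_succ (b t : α) (x N : ℕ) :
    {u : List α | (u : Multiset α) = .replicate (x + 1) b + .replicate (N + 1) t} =
      List.cons b '' {u | (u : Multiset α) = .replicate x b + .replicate (N + 1) t} ∪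
        List.cons t '' {u | (u : Multiset α) = .replicate (x + 1) b + .replicate N t} := by
  have hb : Multiset.replicate (x + 1) b + .replicate (N + 1) t =
      b ::ₘ (.replicate x b + .replicate (N + 1) t) := by
    rw [Multiset.replicate_succ, Multiset.cons_add]
  have ht : Multiset.replicate (x + 1) b + .replicate (N + 1) t =
      t ::ₘ (.replicate (x + 1) b + .replicate N t) := by
    rw [Multiset.replicate_succ t, Multiset.add_cons]
  refine Set.Subset.antisymm (fun u hu => ?_) (Set.union_subset ?_ ?_)
  · rcases u with _ | ⟨c, v⟩
    · exact absurd (hb ▸ hu) (Multiset.zero_ne_cons)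
    have hc : c ∈ Multiset.replicate (x + 1) b + .replicate (N + 1) t :=
      hu ▸ List.mem_cons_self
    rcases Multiset.mem_add.1 hc with hc | hc <;> obtain rfl := Multiset.eq_of_mem_replicate hc
    · exact .inl ⟨v, (Multiset.cons_inj_right c).1 (hu.trans hb), rfl⟩
    · exact .inr ⟨v, (Multiset.cons_inj_right c).1 (hu.trans ht), rfl⟩
  · rintro _ ⟨v, hv, rfl⟩
    exact (congrArg (b ::ₘ ·) hv).trans hb.symm
  · rintro _ ⟨v, hv, rfl⟩
    exact (congrArg (t ::ₘ ·) hv).trans ht.symm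

theorem ncard_setOfPred_coe_eq_replicate_add_replicate {b t : α} (hbt : b ≠ t) (x N : ℕ) :
    {u : List α | (u : Multiset α) = .replicate x b + .replicate N t}.ncard =
      (x + N).choose x := by
  induction x generalizing N with
  | zero => simp [setOfPred_coe_eq_replicate]
  | succ x ihx =>
    induction N with
    | zero =>
      simp only [Multiset.replicate_zero, add_zero, Nat.choose_self, setOfPred_coe_eq_replicate,
        Set.ncard_singleton]
    | succ N ihN =>
      rw [setOfPred_coe_eq_replicate_succ_add_replicate_succ, Set.ncard_union_eq _
        ((finite_setOfPred_coe_eq _).image _) ((finite_setOfPred_coe_eq _).image _),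
        Set.ncard_image_of_injective _ List.cons_injective,
        Set.ncard_image_of_injective _ List.cons_injective, ihx, ihN,
        show x + 1 + (N + 1) = x + (N + 1) + 1 by ring, Nat.choose_succ_succ',
        show x + 1 + N = x + (N + 1) by ring]
      exact Set.disjoint_left.2 (by rintro _ ⟨u, -, rfl⟩ ⟨v, -, h⟩; simp_all)

theorem pair_sublist_append_cons_iff {z t : α} {p q : List α} (hz : z ∉ p) :
    [z, t] <+ p ++ z :: q ↔ t ∈ q := by
  induction p with
  | nil => simp
  | cons c p ih =>
    rw [List.mem_cons, not_or] at hz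
    simp [List.cons_sublist_cons', hz.1, ih hz.2]

theorem exists_eq_append_cons_notMem {t : α} {u : List α} (ht : t ∈ u) :
    ∃ p q, u = p ++ t :: q ∧ t ∉ q := by
  obtain ⟨q, p, h, hq⟩ := List.eq_append_cons_of_mem (List.mem_reverse.2 ht)
  exact ⟨p.reverse, q.reverse, by simpa using congrArg List.reverse h, by simpa using hq⟩

theorem injOn_append_cons (y : α) :
    Set.InjOn (fun x : List α × List α => x.1 ++ y :: x.2) {x | y ∉ x.2} := by
  rintro ⟨p, q⟩ hq ⟨p', q'⟩ hq' h
  rcases List.append_eq_append_iff.1 h with ⟨_ | ⟨c, r⟩, hr⟩ | ⟨_ | ⟨c, r⟩, hr⟩ <;>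
    simp_all [Set.mem_ofPred_eq]

theorem coe_append_cons (y : α) (p q : List α) :
    ((p ++ y :: q : List α) : Multiset α) = y ::ₘ ((p ++ q : List α) : Multiset α) :=
  Multiset.coe_eq_coe.2 List.perm_middle

variable [LinearOrder α]

/-- Words avoiding the pattern `123`, i.e. without strictly increasing subsequence of length
three. -/
def Avoids123 (u : List α) : Prop :=
  u.Triplewise fun a b c => a < b → c ≤ b

/-- The rearrangements of the multiset `m` that avoid `123`. -/
def avoiders123 (m : Multiset α) : Set (List α) :=
  {u | (u : Multiset α) = m ∧ Avoids123 u}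

theorem finite_avoiders123 (m : Multiset α) : (avoiders123 m).Finite :=
  (finite_setOfPred_coe_eq m).subset fun _ hu => hu.1

theorem avoids123_cons_iff {y : α} {v : List α} (h : ∀ b ∈ v, y < b → ∀ c ∈ v, c ≤ b) :
    Avoids123 (y :: v) ↔ Avoids123 v := by
  refine List.triplewise_cons.trans (and_iff_right ?_)
  exact List.pairwise_of_forall_mem_list fun b hb c hc hyb => h b hb hyb c hc

theorem avoids123_append_cons_iff {y : α} {p q : List α} (hq : ∀ c ∈ q, c ≤ y) :
    Avoids123 (p ++ y :: q) ↔ Avoids123 (p ++ q) ∧ p.Pairwise fun a b => a < b → y ≤ b := by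
  have hyq : q.Pairwise fun b c => y < b → c ≤ b :=
    List.pairwise_of_forall_mem_list fun b hb _ _ hyb => absurd (hq b hb) hyb.not_ge
  simp only [Avoids123, List.triplewise_append, List.triplewise_cons, List.pairwise_cons,
    List.forall_mem_cons, hyq]
  have : ∀ a ∈ p, ∀ c ∈ q, a < y → c ≤ y := fun _ _ c hc _ => hq c hc
  grind

theorem Avoids123.of_cons {y : α} {v : List α} (h : Avoids123 (y :: v)) : Avoids123 v :=
  (List.triplewise_cons.1 h).2

section InsertMax

variable {m : Multiset α} {z t : α}

theorem avoids123_append_cons_max_iff (hm : ∀ a ∈ m, a < z) (hzt : z < t) {N : ℕ} {p q : List α}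
    (hpq : ((p ++ q : List α) : Multiset α) = m + .replicate N t) (hq : t ∉ q) :
    Avoids123 (p ++ z :: q) ↔ Avoids123 (p ++ t :: q) := by
  have hmem (a : α) (ha : a ∈ p ++ q) : a < z ∨ a = t := by
    have ha : a ∈ m + .replicate N t := hpq ▸ ha
    exact (Multiset.mem_add.1 ha).imp (hm a) Multiset.eq_of_mem_replicate
  have hqz : ∀ c ∈ q, c ≤ z := fun c hc =>
    ((hmem c (List.mem_append_right p hc)).resolve_right fun h => hq (h ▸ hc)).le
  rw [avoids123_append_cons_iff hqz,
    avoids123_append_cons_iff fun c hc => (hqz c hc).trans hzt.le]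
  refine and_congr_right' (List.Pairwise.iff_of_mem fun {a b} _ hb => imp_congr_right fun _ => ?_)
  rcases hmem b (List.mem_append_left q hb) with h | rfl
  · exact iff_of_false h.not_ge (h.trans hzt).not_ge
  · exact iff_of_true hzt.le le_rfl

theorem avoiders123_not_sublist_eq_image (hz : z ∉ m) :
    {u ∈ avoiders123 (z ::ₘ m) | ¬[z, t] <+ u} = (fun x => x.1 ++ z :: x.2) ''
      {x : List α × List α | t ∉ x.2 ∧ ((x.1 ++ x.2 : List α) : Multiset α) = m ∧
        Avoids123 (x.1 ++ z :: x.2)} := by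
  refine Set.Subset.antisymm ?_ ?_
  · rintro u ⟨⟨hu, hav⟩, hnot⟩
    have hzu : z ∈ (u : Multiset α) := hu ▸ Multiset.mem_cons_self z m
    obtain ⟨p, q, rfl⟩ := List.append_of_mem (Multiset.mem_coe.1 hzu)
    rw [coe_append_cons, Multiset.cons_inj_right] at hu
    refine ⟨(p, q), ⟨fun ht => hnot ?_, hu, hav⟩, rfl⟩
    exact ((List.singleton_sublist.2 ht).cons_cons z).trans (List.sublist_append_right p _)
  · rintro _ ⟨⟨p, q⟩, ⟨htq, hpq, hav⟩, rfl⟩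
    have hzp : z ∉ p := fun h => hz (hpq ▸ List.mem_append_left q h)
    exact ⟨⟨(coe_append_cons z p q).trans (congrArg (z ::ₘ ·) hpq), hav⟩,
      fun h => htq ((pair_sublist_append_cons_iff hzp).1 h)⟩

theorem avoiders123_cons_eq_image (m : Multiset α) (t : α) :
    avoiders123 (t ::ₘ m) = (fun x => x.1 ++ t :: x.2) ''
      {x : List α × List α | t ∉ x.2 ∧ ((x.1 ++ x.2 : List α) : Multiset α) = m ∧
        Avoids123 (x.1 ++ t :: x.2)} := by
  refine Set.Subset.antisymm ?_ ?_
  · rintro u ⟨hu, hav⟩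
    have ht : t ∈ (u : Multiset α) := hu ▸ Multiset.mem_cons_self t m
    obtain ⟨p, q, rfl, hq⟩ := exists_eq_append_cons_notMem (Multiset.mem_coe.1 ht)
    rw [coe_append_cons, Multiset.cons_inj_right] at hu
    exact ⟨(p, q), ⟨hq, hu, hav⟩, rfl⟩
  · rintro _ ⟨⟨p, q⟩, ⟨-, hpq, hav⟩, rfl⟩
    exact ⟨(coe_append_cons t p q).trans (congrArg (t ::ₘ ·) hpq), hav⟩

/-- If all letters of `m` are smaller than `z` and `z < t`, turning the letter `z` into a `t` is a
bijection from the avoiders with no `t` after `z`: it is undone on the last `t`. -/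
theorem ncard_avoiders123_not_sublist (hm : ∀ a ∈ m, a < z) (hzt : z < t) (N : ℕ) :
    {u ∈ avoiders123 (z ::ₘ m + .replicate N t) | ¬[z, t] <+ u}.ncard =
      (avoiders123 (m + .replicate (N + 1) t)).ncard := by
  have hz : z ∉ m + .replicate N t := fun h => (Multiset.mem_add.1 h).elim
    (fun h => (hm z h).false) fun h => hzt.ne (Multiset.eq_of_mem_replicate h)
  rw [Multiset.cons_add, avoiders123_not_sublist_eq_image hz, Multiset.replicate_succ,
    Multiset.add_cons, avoiders123_cons_eq_image, ((injOn_append_cons z).mono ?_).ncard_image,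
    ((injOn_append_cons t).mono fun x hx => hx.1).ncard_image]
  · congr 1
    ext x
    exact and_congr_right fun ht => and_congr_right fun hx =>
      avoids123_append_cons_max_iff hm hzt hx ht
  · exact fun x hx h => hz (hx.2.1 ▸ List.mem_append_right x.1 h)

theorem avoiders123_sublist_succ (hm : ∀ a ∈ m, a < z) (hzt : z < t) (N : ℕ) :
    {u ∈ avoiders123 (z ::ₘ m + .replicate (N + 1) t) | [z, t] <+ u} =
      List.cons t '' {u ∈ avoiders123 (z ::ₘ m + .replicate N t) | [z, t] <+ u} ∪
        List.cons z '' avoiders123 (m + .replicate (N + 1) t) := by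
  have htcons : z ::ₘ m + .replicate (N + 1) t = t ::ₘ (z ::ₘ m + .replicate N t) := by
    rw [Multiset.replicate_succ, Multiset.add_cons]
  have hletter (c : α) (hc : c ∈ z ::ₘ m + .replicate (N + 1) t) : c = t ∨ c = z ∨ c < z := by
    rw [Multiset.mem_add, Multiset.mem_cons] at hc
    rcases hc with (hc | hc) | hc
    exacts [.inr (.inl hc), .inr (.inr (hm c hc)), .inl (Multiset.eq_of_mem_replicate hc)]
  refine Set.Subset.antisymm ?_ (Set.union_subset ?_ ?_)
  · rintro (_ | ⟨c, v⟩) ⟨⟨hu, hav⟩, hsub⟩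
    · simp at hsub
    rcases hletter c (hu ▸ List.mem_cons_self) with rfl | rfl | hc
    · refine .inl ⟨v, ⟨⟨(Multiset.cons_inj_right c).1 (hu.trans htcons), hav.of_cons⟩, ?_⟩, rfl⟩
      exact (List.cons_sublist_cons'.1 hsub).resolve_right fun h => hzt.ne h.1
    · rw [Multiset.cons_add] at hu
      exact .inr ⟨v, ⟨(Multiset.cons_inj_right c).1 hu, hav.of_cons⟩, rfl⟩
    · have hsub := (List.cons_sublist_cons'.1 hsub).resolve_right fun h => hc.ne' h.1
      have htz := List.rel_of_pairwise_cons ((List.triplewise_cons.1 hav).1.sublist hsub)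
        (List.mem_singleton_self t) hc
      exact absurd hzt htz.not_gt
  · rintro _ ⟨v, ⟨⟨hv, hav⟩, hsub⟩, rfl⟩
    refine ⟨⟨(congrArg (t ::ₘ ·) hv).trans htcons.symm, ?_⟩, hsub.cons t⟩
    refine (avoids123_cons_iff fun b hb htb => ?_).2 hav
    have hb := hletter b (htcons ▸ Multiset.mem_cons_of_mem (hv ▸ hb))
    grind
  · rintro _ ⟨v, ⟨hv, hav⟩, rfl⟩
    have hmem {c : α} (hc : c ∈ v) : c = t ∨ c = z ∨ c < z :=
      hletter c ((Multiset.cons_add z m _).symm ▸ Multiset.mem_cons_of_mem (hv ▸ hc))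
    refine ⟨⟨(congrArg (z ::ₘ ·) hv).trans (Multiset.cons_add z m _).symm, ?_⟩, ?_⟩
    · exact (avoids123_cons_iff fun b hb hzb c hc => by grind).2 hav
    · have ht : t ∈ (v : Multiset α) := by simp [hv]
      exact (List.singleton_sublist.2 (Multiset.mem_coe.1 ht)).cons_cons z

theorem ncard_avoiders123_sublist (hm : ∀ a ∈ m, a < z) (hzt : z < t) (N : ℕ) :
    {u ∈ avoiders123 (z ::ₘ m + .replicate N t) | [z, t] <+ u}.ncard =
      ∑ i ∈ range N, (avoiders123 (m + .replicate (i + 1) t)).ncard := by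
  induction N with
  | zero =>
    rw [range_zero, sum_empty, Set.ncard_eq_zero ((finite_avoiders123 _).sep _)]
    refine Set.eq_empty_of_forall_notMem fun u ⟨⟨hu, _⟩, hzu⟩ => ?_
    have ht : t ∈ z ::ₘ m + .replicate 0 t := hu ▸ hzu.subset (by simp)
    rw [Multiset.replicate_zero, add_zero, Multiset.mem_cons] at ht
    exact ht.elim hzt.ne' fun ht => (hzt.trans (hm t ht)).false
  | succ N ih =>
    rw [avoiders123_sublist_succ hm hzt, Set.ncard_union_eq _
      (((finite_avoiders123 _).sep _).image _) ((finite_avoiders123 _).image _),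
      Set.ncard_image_of_injective _ List.cons_injective,
      Set.ncard_image_of_injective _ List.cons_injective, ih, sum_range_succ]
    exact Set.disjoint_left.2 (by rintro _ ⟨u, -, rfl⟩ ⟨v, -, h⟩; simp_all)

theorem ncard_avoiders123_cons_add_replicate (hm : ∀ a ∈ m, a < z) (hzt : z < t) (N : ℕ) :
    (avoiders123 (z ::ₘ m + .replicate N t)).ncard =
      ∑ i ∈ range (N + 1), (avoiders123 (m + .replicate (i + 1) t)).ncard := by
  rw [sum_range_succ, ← ncard_avoiders123_sublist hm hzt, ← ncard_avoiders123_not_sublist hm hzt,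
    ← Set.ncard_union_eq _ ((finite_avoiders123 _).sep _) ((finite_avoiders123 _).sep _)]
  · congr 1
    ext u
    simp only [Set.mem_union, Set.mem_ofPred_eq, ← and_or_left, em, and_true]
  · exact Set.disjoint_left.2 fun u hu hu' => hu'.2 hu.2

end InsertMax

theorem avoiders123_replicate_add_replicate (b t : α) (x N : ℕ) :
    avoiders123 (.replicate x b + .replicate N t) =
      {u : List α | (u : Multiset α) = .replicate x b + .replicate N t} := by
  refine Set.sep_eq_self_iff_mem_true.2 fun u hu => ?_
  have hletter (c : α) (hc : c ∈ u) : c = b ∨ c = t := by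
    have hc : c ∈ Multiset.replicate x b + .replicate N t := hu ▸ hc
    exact (Multiset.mem_add.1 hc).imp Multiset.eq_of_mem_replicate Multiset.eq_of_mem_replicate
  rw [Avoids123, List.triplewise_iff_getElem]
  intro i j k hij hjk hk hlt
  have := hletter _ (List.getElem_mem (hij.trans (hjk.trans hk)))
  have := hletter _ (List.getElem_mem (hjk.trans hk))
  have := hletter _ (List.getElem_mem hk)
  grind

theorem ncard_avoiders123 {b t : α} (hbt : b < t) (x N : ℕ) (M : Finset α)
    (hM : ∀ a ∈ M, b < a ∧ a < t) :
    ((avoiders123 (.replicate x b + M.val + .replicate N t)).ncard : ℤ) =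
      ballotNumber x #M N := by
  induction M using Finset.induction_on_max generalizing N with
  | empty =>
    rw [Finset.empty_val, add_zero, avoiders123_replicate_add_replicate,
      ncard_setOfPred_coe_eq_replicate_add_replicate hbt.ne, card_empty, ballotNumber_zero]
  | insert z M hz ih =>
    have hzM : z ∉ M := fun h => (hz z h).false
    have hbz := hM z (mem_insert_self z M)
    have hlt (a : α) (ha : a ∈ Multiset.replicate x b + M.val) : a < z := by
      rcases Multiset.mem_add.1 ha with ha | ha
      · exact (Multiset.eq_of_mem_replicate ha).trans_lt hbz.1
      · exact hz a ha
    rw [insert_val_of_notMem hzM, Multiset.add_cons, ncard_avoiders123_cons_add_replicate hlt hbz.2,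
      Nat.cast_sum, card_insert_of_notMem hzM, ballotNumber_succ]
    exact sum_congr rfl fun i _ => ih (i + 1) fun a ha => hM a (mem_insert_of_mem ha)

end Avoiders

section TailCounts

/-- The number of tails with a given content on the `1211` side: they use `s` of the letters below
`z` once each, `i` times the letter `z` and `N` times the letter `t > z`. -/
def tailCount1211 : ℕ → ℕ → ℕ → ℤ
  | _, _, 0 => 0
  | s, 0, N + 1 => ballotNumber 0 s (N + 1)
  | s, _ + 1, N + 1 => ballotNumber 0 (s + 1) (N + 1)

/-- The number of tails with a given content on the `1222` side: they use `x` times the letter `1`,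
`s` of the letters between `1` and `t` once each and `c` times the letter `t`. -/
def tailCount1222 : ℕ → ℕ → ℕ → ℤ
  | s, x, 1 => ballotNumber x s 1
  | s, x, 2 => ballotNumber x s 2
  | _, _, _ => 0

theorem sum_antidiagonal_tailCount1211_eq (s r : ℕ) :
    ∑ q ∈ antidiagonal r, tailCount1211 s q.1 q.2 =
      ∑ q ∈ antidiagonal r, tailCount1222 s q.1 q.2 := by
  rcases r with _ | _ | L
  · simp [tailCount1211, tailCount1222]
  · simp [Nat.sum_antidiagonal_succ', tailCount1211, tailCount1222]
  · have hleft : ∑ q ∈ antidiagonal (L + 2), tailCount1211 s q.1 q.2 =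
        ballotNumber 0 s (L + 2) + ∑ i ∈ range (L + 1), ballotNumber 0 (s + 1) (i + 1) := by
      rw [Nat.sum_antidiagonal_succ, Nat.sum_antidiagonal_succ', ← Nat.sum_antidiagonal_swap,
        Nat.sum_antidiagonal_eq_sum_range_succ_mk]
      simp [tailCount1211]
    have hright : ∑ q ∈ antidiagonal (L + 2), tailCount1222 s q.1 q.2 =
        ballotNumber (L + 1) s 1 + ballotNumber L s 2 := by
      rw [Nat.sum_antidiagonal_succ', Nat.sum_antidiagonal_succ',
        sum_eq_single_of_mem (L, 0) (by simp)]
      · simp [tailCount1222]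
      · rintro ⟨i, _ | j⟩ hij hne
        · simp_all
        · rfl
    rw [hleft, hright, ballotNumber_add_sum]

end TailCounts

section Fibers

variable {α ι : Type*}

theorem ncard_eq_sum_ncard_fiber {A : Set α} (hA : A.Finite) {f : α → ι}
    {I : Finset ι} (hf : ∀ u ∈ A, f u ∈ I) : A.ncard = ∑ i ∈ I, {u ∈ A | f u = i}.ncard := by
  classical
  have hcard (i : ι) : {u ∈ A | f u = i}.ncard = #{u ∈ hA.toFinset | f u = i} := by
    rw [← Set.ncard_coe_finset]
    simp
  simp only [hcard]
  rw [Set.ncard_eq_toFinset_card A hA]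
  exact card_eq_sum_card_fiberwise fun u hu => hf u (hA.mem_toFinset.1 hu)

theorem finite_setOfPred_forall_mem_length_eq (L : Finset α) (n : ℕ) :
    {u : List α | (∀ a ∈ u, a ∈ L) ∧ u.length = n}.Finite := by
  refine ((List.finite_length_eq L n).image (List.map Subtype.val)).subset ?_
  rintro u ⟨hu, rfl⟩
  exact ⟨u.attachWith (· ∈ L) hu, by simp, by simp⟩

variable [DecidableEq α] {M : Finset α} {z t : α}

theorem coe_eq_val_add_replicate_add_replicate_iff (hzt : z ≠ t) (hz : z ∉ M) (ht : t ∉ M)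
    {S : Finset α} (hS : S ⊆ M) {i N : ℕ} {u : List α} :
    (u : Multiset α) = S.val + .replicate i z + .replicate N t ↔
      (∀ a ∈ u, a ∈ insert z (insert t M)) ∧ (∀ a ∈ M, u.count a ≤ 1) ∧
        {a ∈ M | a ∈ u} = S ∧ u.count z = i ∧ u.count t = N := by
  have hcount (a : α) : (S.val + .replicate i z + .replicate N t).count a =
      (if a ∈ S then 1 else 0) + (if z = a then i else 0) + if t = a then N else 0 := by
    simp [Multiset.count_add, Multiset.count_replicate, Multiset.count_eq_of_nodup S.nodup]
  simp only [Multiset.ext, hcount, Multiset.coe_count]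
  constructor
  · intro h
    have hmem (a : α) : a ∈ u ↔ a ∈ S ∨ z = a ∧ i ≠ 0 ∨ t = a ∧ N ≠ 0 := by
      rw [← List.count_pos_iff, h]
      grind
    refine ⟨fun a ha => ?_, fun a ha => ?_, ?_, ?_, ?_⟩
    · grind
    · grind
    · ext a
      grind
    · grind
    · grind
  · rintro ⟨hletter, hone, rfl, rfl, rfl⟩ a
    have := hletter a
    have := hone a
    have := List.count_pos_iff (a := a) (l := u)
    grind

theorem card_filter_add_count_add_count (hzt : z ≠ t) (hz : z ∉ M) (ht : t ∉ M) {u : List α}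
    (hletter : ∀ a ∈ u, a ∈ insert z (insert t M)) (hone : ∀ a ∈ M, u.count a ≤ 1) :
    #{a ∈ M | a ∈ u} + (u.count z + u.count t) = u.length := by
  have hcoe := (coe_eq_val_add_replicate_add_replicate_iff hzt hz ht (filter_subset _ M)).2
    ⟨hletter, hone, rfl, rfl, rfl⟩
  have hlen := congrArg Multiset.card hcoe
  simp only [Multiset.coe_card, Multiset.card_add, Multiset.card_replicate, card_val] at hlen
  rw [hlen, add_assoc]

theorem ncard_eq_sum_antidiagonal_of_content (hzt : z ≠ t) (hz : z ∉ M) (ht : t ∉ M)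
    {P : List α → Prop} {f : ℕ → ℕ → ℕ → ℤ}
    (hf : ∀ S ⊆ M, ∀ i N, ({u : List α | P u ∧
      (u : Multiset α) = S.val + .replicate i z + .replicate N t}.ncard : ℤ) = f #S i N) (r : ℕ) :
    ({u : List α | P u ∧ (∀ a ∈ u, a ∈ insert z (insert t M)) ∧ (∀ a ∈ M, u.count a ≤ 1) ∧
        u.length = r}.ncard : ℤ) =
      ∑ p ∈ antidiagonal r, (#M).choose p.1 * ∑ q ∈ antidiagonal p.2, f p.1 q.1 q.2 := by
  let A : Set (List α) := {u | P u ∧ (∀ a ∈ u, a ∈ insert z (insert t M)) ∧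
    (∀ a ∈ M, u.count a ≤ 1) ∧ u.length = r}
  let content (u : List α) : (_ : ℕ × ℕ) × Finset α × ℕ × ℕ :=
    ⟨(#{a ∈ M | a ∈ u}, u.count z + u.count t), {a ∈ M | a ∈ u}, u.count z, u.count t⟩
  let I := (antidiagonal r).sigma fun p => powersetCard p.1 M ×ˢ antidiagonal p.2
  have hA : A.Finite :=
    (finite_setOfPred_forall_mem_length_eq _ r).subset fun u hu => ⟨hu.2.1, hu.2.2.2⟩
  have hI (u : List α) (hu : u ∈ A) : content u ∈ I := by
    have hlen := card_filter_add_count_add_count hzt hz ht hu.2.1 hu.2.2.1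
    simp [I, content, hlen, hu.2.2.2]
  have hfiber : ∀ x ∈ I, ({u ∈ A | content u = x}.ncard : ℤ) = f x.1.1 x.2.2.1 x.2.2.2 := by
    rintro ⟨p, S, q⟩ hx
    simp only [I, mem_sigma, mem_product, mem_powersetCard,
      HasAntidiagonal.mem_antidiagonal] at hx
    obtain ⟨hp, ⟨hS, hcard⟩, hq⟩ := hx
    rw [← hcard, ← hf S hS]
    congr 2
    ext u
    change _ ↔ P u ∧ _
    rw [coe_eq_val_add_replicate_add_replicate_iff hzt hz ht hS]
    have hlen (h₁ h₂) := card_filter_add_count_add_count hzt hz ht (u := u) h₁ h₂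
    simp only [A, content, Set.mem_ofPred_eq, Sigma.mk.injEq, heq_eq_eq, Prod.ext_iff]
    grind
  change (A.ncard : ℤ) = _
  rw [ncard_eq_sum_ncard_fiber hA hI, Nat.cast_sum, sum_congr rfl hfiber, sum_sigma]
  refine sum_congr rfl fun p _ => ?_
  simp only [sum_product, sum_const, card_powersetCard, nsmul_eq_mul]

end Fibers

section TailContents

variable {α : Type*} [LinearOrder α] {m : Multiset α} {z t : α}

theorem triple_sublist_of_avoids123_cons {c : α} {v : List α} (hcz : c < z) (hzt : z < t)
    (hav : Avoids123 (c :: v)) (ht : t ∈ v) (hz : 2 ≤ v.count z) : [t, z, z] <+ v := by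
  obtain ⟨p, q, rfl⟩ := List.append_of_mem ht
  have hzp : z ∉ p := fun h => by
    have hsub : [z, t] <+ p ++ t :: q :=
      (List.singleton_sublist.2 h).append (List.singleton_sublist.2 List.mem_cons_self)
    have htz := List.rel_of_pairwise_cons ((List.triplewise_cons.1 hav).1.sublist hsub)
      (List.mem_singleton_self t) hcz
    exact htz.not_gt hzt
  have hzq : List.replicate 2 z <+ q := by
    rw [List.replicate_sublist_iff]
    rwa [List.count_append, List.count_eq_zero.2 hzp, zero_add, List.count_cons_of_ne hzt.ne'] at hz
  exact (hzq.cons_cons t).trans (List.sublist_append_right p _)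

theorem eq_or_eq_or_lt_of_mem {u : List α} {c : α} {i N : ℕ} (hm : ∀ a ∈ m, a < z)
    (hu : (u : Multiset α) = m + .replicate i z + .replicate N t) (hc : c ∈ u) :
    c = t ∨ c = z ∨ c < z := by
  rw [← Multiset.mem_coe, hu, Multiset.mem_add, Multiset.mem_add] at hc
  rcases hc with (hc | hc) | hc
  exacts [.inr (.inr (hm c hc)), .inr (.inl (Multiset.eq_of_mem_replicate hc)),
    .inl (Multiset.eq_of_mem_replicate hc)]

theorem avoiders123_not_sublist_succ (hm : ∀ a ∈ m, a < z) (hzt : z < t) (i N : ℕ) :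
    {u ∈ avoiders123 (m + .replicate (i + 2) z + .replicate (N + 1) t) | ¬[t, z, z] <+ u} =
      List.cons z '' {u ∈ avoiders123 (m + .replicate (i + 1) z + .replicate (N + 1) t) |
        ¬[t, z, z] <+ u} := by
  have hzcons : m + .replicate (i + 2) z + .replicate (N + 1) t =
      z ::ₘ (m + .replicate (i + 1) z + .replicate (N + 1) t) := by
    rw [Multiset.replicate_succ z, Multiset.add_cons, Multiset.cons_add]
  refine Set.Subset.antisymm ?_ ?_
  · rintro (_ | ⟨c, v⟩) ⟨⟨hu, hav⟩, hsub⟩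
    · simp at hu
    have hz : i + 2 ≤ (c :: v).count z := by
      rw [← Multiset.coe_count, hu, Multiset.count_add, Multiset.count_add,
        Multiset.count_replicate_self]
      omega
    rcases eq_or_eq_or_lt_of_mem hm hu List.mem_cons_self with rfl | rfl | hc
    · rw [List.count_cons_of_ne hzt.ne'] at hz
      have hzv : List.replicate 2 z <+ v := List.replicate_sublist_iff.2 (le_of_add_le_right hz)
      exact absurd (hzv.cons_cons c) hsub
    · rw [hzcons] at hu
      exact ⟨v, ⟨⟨(Multiset.cons_inj_right c).1 hu, hav.of_cons⟩,
        fun h => hsub (h.cons c)⟩, rfl⟩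
    · rw [List.count_cons_of_ne hc.ne] at hz
      have ht : t ∈ c :: v := by
        rw [← Multiset.mem_coe, hu]
        simp
      have ht : t ∈ v := (List.mem_cons.1 ht).resolve_left (hc.trans hzt).ne'
      have hsub' := triple_sublist_of_avoids123_cons hc hzt hav ht (le_of_add_le_right hz)
      exact absurd (hsub'.cons c) hsub
  · rintro _ ⟨v, ⟨⟨hv, hav⟩, hsub⟩, rfl⟩
    have hmem {c : α} (hc : c ∈ v) : c = t ∨ c = z ∨ c < z := eq_or_eq_or_lt_of_mem hm hv hc
    refine ⟨⟨(congrArg (z ::ₘ ·) hv).trans hzcons.symm, ?_⟩, fun h => hsub ?_⟩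
    · exact (avoids123_cons_iff fun b hb hzb c hc => by grind).2 hav
    · exact (List.cons_sublist_cons'.1 h).resolve_right fun h => hzt.ne' h.1

theorem avoiders123_not_sublist_eq_self (hm : m.count z ≤ 1) :
    {u ∈ avoiders123 m | ¬[t, z, z] <+ u} = avoiders123 m := by
  refine Set.sep_eq_self_iff_mem_true.2 fun u hu hsub => ?_
  have hz : [z, z] <+ u := List.sublist_of_cons_sublist hsub
  rw [← hu.1, Multiset.coe_count] at hm
  exact ((List.replicate_sublist_iff (n := 2)).1 hz).not_gt (Nat.lt_succ_of_le hm)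

theorem ncard_avoiders123_not_sublist_triple (hm : ∀ a ∈ m, a < z) (hzt : z < t) (i N : ℕ) :
    {u ∈ avoiders123 (m + .replicate (i + 1) z + .replicate (N + 1) t) |
        ¬[t, z, z] <+ u}.ncard =
      (avoiders123 (z ::ₘ m + .replicate (N + 1) t)).ncard := by
  have hzm : m.count z = 0 := Multiset.count_eq_zero.2 fun h => (hm z h).false
  induction i with
  | zero =>
    rw [zero_add, Multiset.replicate_one, add_comm m, Multiset.singleton_add,
      avoiders123_not_sublist_eq_self]
    rw [Multiset.count_add, Multiset.count_cons_self, hzm, Multiset.count_replicate,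
      if_neg hzt.ne']
  | succ i ih =>
    rw [avoiders123_not_sublist_succ hm hzt, Set.ncard_image_of_injective _ List.cons_injective, ih]

theorem setOfPred_content_succ_eq (m : Multiset α) (z t : α) (N : ℕ) :
    {u : List α | (Avoids123 u ∧ t ∈ u ∧ ¬[t, z, z] <+ u) ∧
        (u : Multiset α) = m + .replicate (N + 1) t} =
      {u ∈ avoiders123 (m + .replicate (N + 1) t) | ¬[t, z, z] <+ u} := by
  ext u
  have ht (hu : (u : Multiset α) = m + .replicate (N + 1) t) : t ∈ u := by
    rw [← Multiset.mem_coe, hu]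
    simp
  simp only [avoiders123, Set.mem_ofPred_eq]
  tauto

variable {b : α} {S : Finset α}

theorem ncard_content_eq_tailCount1211 (hS : ∀ a ∈ S, b < a ∧ a < z) (hbz : b < z) (hzt : z < t)
    (i N : ℕ) :
    ({u : List α | (Avoids123 u ∧ t ∈ u ∧ ¬[t, z, z] <+ u) ∧
      (u : Multiset α) = S.val + .replicate i z + .replicate N t}.ncard : ℤ) =
      tailCount1211 #S i N := by
  have hzS : z ∉ S := fun h => (hS z h).2.false
  have hSt (a : α) (ha : a ∈ S) : b < a ∧ a < t := ⟨(hS a ha).1, (hS a ha).2.trans hzt⟩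
  rcases N with _ | N
  · have htS : t ∉ S := fun h => (hSt t h).2.false
    rw [tailCount1211, Nat.cast_eq_zero, Set.ncard_eq_zero
      ((finite_setOfPred_coe_eq _).subset fun u hu => hu.2)]
    refine Set.eq_empty_of_forall_notMem fun u hu => ?_
    have ht : t ∈ S.val + .replicate i z + .replicate 0 t := hu.2 ▸ hu.1.2.1
    simp [htS, Multiset.mem_replicate, hzt.ne'] at ht
  rw [setOfPred_content_succ_eq]
  rcases i with _ | i
  · rw [avoiders123_not_sublist_eq_self, tailCount1211,
      ← ncard_avoiders123 (hbz.trans hzt) 0 (N + 1) S hSt, Multiset.replicate_zero,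
      Multiset.replicate_zero, add_zero, zero_add]
    rw [Multiset.replicate_zero, add_zero, Multiset.count_add, Multiset.count_eq_zero.2 hzS,
      Multiset.count_replicate, if_neg hzt.ne']
    exact zero_le_one
  · rw [ncard_avoiders123_not_sublist_triple (fun a ha => (hS a ha).2) hzt, tailCount1211,
      ← card_insert_of_notMem hzS, ← ncard_avoiders123 (hbz.trans hzt) 0 (N + 1) _
        (forall_mem_insert _ _ _ |>.2 ⟨⟨hbz, hzt⟩, hSt⟩),
      Multiset.replicate_zero, zero_add, insert_val_of_notMem hzS]

theorem ncard_content_eq_tailCount1222 (hS : ∀ a ∈ S, b < a ∧ a < t) (hbt : b < t) (x c : ℕ) :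
    ({u : List α | (Avoids123 u ∧ t ∈ u ∧ u.count t ≤ 2) ∧
      (u : Multiset α) = S.val + .replicate x b + .replicate c t}.ncard : ℤ) =
      tailCount1222 #S x c := by
  have htS : t ∉ S.val := fun h => (hS t h).2.false
  have hcount {u : List α}
      (hu : (u : Multiset α) = S.val + .replicate x b + .replicate c t) : u.count t = c := by
    rw [← Multiset.coe_count, hu, Multiset.count_add, Multiset.count_add,
      Multiset.count_eq_zero.2 htS, Multiset.count_replicate, if_neg hbt.ne,
      Multiset.count_replicate_self, zero_add, zero_add]
  by_cases hc : c = 1 ∨ c = 2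
  · have hset : {u : List α | (Avoids123 u ∧ t ∈ u ∧ u.count t ≤ 2) ∧
        (u : Multiset α) = S.val + .replicate x b + .replicate c t} =
        avoiders123 (.replicate x b + S.val + .replicate c t) := by
      ext u
      rw [add_comm (Multiset.replicate x b)]
      simp only [avoiders123, Set.mem_ofPred_eq, ← List.count_pos_iff]
      grind
    rw [hset, ncard_avoiders123 hbt x c S hS]
    rcases hc with rfl | rfl <;> rfl
  · have hzero : tailCount1222 #S x c = 0 := by
      rw [tailCount1222] <;> grind
    rw [hzero, Nat.cast_eq_zero, Set.ncard_eq_zero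
      ((finite_setOfPred_coe_eq _).subset fun u hu => hu.2)]
    refine Set.eq_empty_of_forall_notMem fun u ⟨⟨_, ht, hle⟩, hu⟩ => ?_
    have := List.count_pos_iff.2 ht
    grind

end TailContents

section Patterns

variable {s w : List ℕ}

theorem wordOrdIso_quadruple_iff {a b c d a' b' c' d' : ℕ} :
    WordOrdIso [a, b, c, d] [a', b', c', d'] ↔
      (a < b ↔ a' < b') ∧ (a < c ↔ a' < c') ∧ (a < d ↔ a' < d') ∧ (b < a ↔ b' < a') ∧
      (b < c ↔ b' < c') ∧ (b < d ↔ b' < d') ∧ (c < a ↔ c' < a') ∧ (c < b ↔ c' < b') ∧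
      (c < d ↔ c' < d') ∧ (d < a ↔ d' < a') ∧ (d < b ↔ d' < b') ∧ (d < c ↔ d' < c') := by
  have hcomm (P : ℕ → ℕ → Prop) :
      (∀ i j, i < 4 → j < 4 → P i j) ↔ ∀ i < 4, ∀ j < 4, P i j :=
    forall_congr' fun i => forall_comm
  simp only [WordOrdIso, List.length_cons, List.length_nil, zero_add, Nat.reduceAdd, hcomm,
    Nat.forall_lt_succ_left, List.getD_cons_zero, List.getD_cons_succ, lt_self_iff_false,
    not_lt_zero, IsEmpty.forall_iff, implies_true, iff_self, true_and, and_true, and_assoc]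

theorem wordOrdIso_1123_iff :
    WordOrdIso s [1, 1, 2, 3] ↔ ∃ a b c, a < b ∧ b < c ∧ s = [a, a, b, c] := by
  constructor
  · intro h
    obtain ⟨a, a', b, c, rfl⟩ := List.length_eq_four.1 h.1
    rw [wordOrdIso_quadruple_iff] at h
    exact ⟨a, b, c, by omega, by omega, by grind⟩
  · rintro ⟨a, b, c, hab, hbc, rfl⟩
    rw [wordOrdIso_quadruple_iff]
    omega

theorem wordOrdIso_1211_iff :
    WordOrdIso s [1, 2, 1, 1] ↔ ∃ a b, a < b ∧ s = [a, b, a, a] := by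
  constructor
  · intro h
    obtain ⟨a, b, a', a'', rfl⟩ := List.length_eq_four.1 h.1
    rw [wordOrdIso_quadruple_iff] at h
    exact ⟨a, b, by omega, by grind⟩
  · rintro ⟨a, b, hab, rfl⟩
    rw [wordOrdIso_quadruple_iff]
    omega

theorem wordOrdIso_1222_iff :
    WordOrdIso s [1, 2, 2, 2] ↔ ∃ a b, a < b ∧ s = [a, b, b, b] := by
  constructor
  · intro h
    obtain ⟨a, b, b', b'', rfl⟩ := List.length_eq_four.1 h.1
    rw [wordOrdIso_quadruple_iff] at h
    exact ⟨a, b, by omega, by grind⟩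
  · rintro ⟨a, b, hab, rfl⟩
    rw [wordOrdIso_quadruple_iff]
    omega

theorem patAvoids_1123_iff :
    PatAvoids w [1, 1, 2, 3] ↔ ∀ a b c, a < b → b < c → ¬[a, a, b, c] <+ w := by
  simp only [PatAvoids, PatContains, wordOrdIso_1123_iff]
  grind

theorem patAvoids_1211_iff : PatAvoids w [1, 2, 1, 1] ↔ ∀ a b, a < b → ¬[a, b, a, a] <+ w := by
  simp only [PatAvoids, PatContains, wordOrdIso_1211_iff]
  grind

theorem patAvoids_1222_iff : PatAvoids w [1, 2, 2, 2] ↔ ∀ a b, a < b → ¬[a, b, b, b] <+ w := by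
  simp only [PatAvoids, PatContains, wordOrdIso_1222_iff]
  grind

theorem PatAvoids.of_sublist {v q : List ℕ} (h : PatAvoids w q) (hv : v <+ w) : PatAvoids v q :=
  fun ⟨s, hs, hq⟩ => h ⟨s, hs.trans hv, hq⟩

end Patterns

section RestrictedGrowth

/-- The largest letter of a word, with value `0` on the empty word. -/
def maxLetter (w : List ℕ) : ℕ :=
  w.foldr max 0

theorem maxLetter_append (v w : List ℕ) :
    maxLetter (v ++ w) = max (maxLetter v) (maxLetter w) := by
  induction v with
  | nil => simp [maxLetter]
  | cons a v ih => simpa [maxLetter, max_assoc] using congrArg (max a) ih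

theorem maxLetter_concat (w : List ℕ) (a : ℕ) : maxLetter (w ++ [a]) = max (maxLetter w) a := by
  rw [maxLetter_append]
  simp [maxLetter]

theorem maxLetter_le_iff {w : List ℕ} {K : ℕ} : maxLetter w ≤ K ↔ ∀ a ∈ w, a ≤ K := by
  induction w with
  | nil => simp [maxLetter]
  | cons a w ih => rw [List.forall_mem_cons, ← ih]; exact max_le_iff

theorem maxLetter_mem {w : List ℕ} (hw : maxLetter w ≠ 0) : maxLetter w ∈ w := by
  by_contra h
  have hle : maxLetter w ≤ maxLetter w - 1 := maxLetter_le_iff.2 fun a ha =>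
    Nat.le_sub_one_of_lt ((maxLetter_le_iff.1 le_rfl a ha).lt_of_ne fun hne => h (hne ▸ ha))
  omega

theorem isRGF_nil : IsRGF [] := by
  simp [IsRGF]

theorem isRGF_concat_iff {w : List ℕ} {a : ℕ} :
    IsRGF (w ++ [a]) ↔ IsRGF w ∧ 1 ≤ a ∧ a ≤ maxLetter w + 1 := by
  rcases eq_or_ne w [] with rfl | hw
  · simp only [IsRGF, maxLetter, List.nil_append, List.forall_mem_singleton, List.length_singleton]
    grind
  have hpos : 0 < w.length := List.length_pos_iff.2 hw
  have hstep (i : ℕ) (hi : i < w.length) : (w ++ [a]).getD i 0 = w.getD i 0 :=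
    List.getD_append w [a] 0 i hi
  have htake (i : ℕ) (hi : i ≤ w.length) : (w ++ [a]).take i = w.take i := by
    simp [List.take_append_of_le_length hi]
  have hlast : (w ++ [a]).getD w.length 0 = a := by simp
  rw [IsRGF, hstep 0 hpos, List.length_append, List.length_singleton]
  constructor
  · rintro ⟨h1, h0, hmax⟩
    refine ⟨⟨fun x hx => h1 x (List.mem_append_left _ hx), fun _ => h0 (by simp), ?_⟩, ?_, ?_⟩
    · intro i hi
      rw [← hstep _ hi, ← htake _ hi.le]
      exact hmax i (by omega)
    · exact h1 a (by simp)
    · have := hmax (w.length - 1) (by omega)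
      rwa [Nat.sub_add_cancel hpos, hlast, htake _ le_rfl, List.take_length] at this
  · rintro ⟨⟨h1, h0, hmax⟩, ha1, ha⟩
    refine ⟨by simpa [or_imp, forall_and] using ⟨h1, ha1⟩, fun _ => h0 hw, fun i hi => ?_⟩
    rcases (Nat.lt_succ_iff.1 hi).lt_or_eq with hi | hi
    · rw [hstep _ hi, htake _ hi.le]
      exact hmax i hi
    · rwa [hi, hlast, htake _ le_rfl, List.take_length]

theorem maxLetter_le_length {w : List ℕ} (hw : IsRGF w) : maxLetter w ≤ w.length := by
  induction w using List.reverseRecOn with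
  | nil => simp [maxLetter]
  | append_singleton w a ih =>
    obtain ⟨hw, -, ha⟩ := isRGF_concat_iff.1 hw
    have := ih hw
    rw [maxLetter_concat, List.length_append, List.length_singleton]
    omega

theorem range'_prefix_append {k : ℕ} {u : List ℕ}
    (hav : PatAvoids (List.range' 1 k ++ u ++ [k + 2]) [1, 1, 2, 3])
    (hpos : ∀ a ∈ u, 1 ≤ a) (hle : ∀ a ∈ u, a ≤ k + 1) (hk : k + 1 ∈ u) :
    List.range' 1 (k + 1) <+: List.range' 1 k ++ u := by
  obtain ⟨c, v, rfl⟩ := List.exists_cons_of_ne_nil (List.ne_nil_of_mem hk)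
  suffices hc : c = k + 1 by
    rw [List.range'_concat, one_mul, add_comm 1, hc, List.prefix_append_right_inj]
    exact List.prefix_append [k + 1] v
  by_contra hc
  have hck : c < k + 1 := (hle c List.mem_cons_self).lt_of_ne hc
  have hcp : [c] <+ List.range' 1 k :=
    List.singleton_sublist.2 (List.mem_range'_1.2 ⟨hpos c List.mem_cons_self, by omega⟩)
  have hkv : [k + 1] <+ v :=
    List.singleton_sublist.2 ((List.mem_cons.1 hk).resolve_left (Ne.symm hc))
  exact patAvoids_1123_iff.1 hav c (k + 1) (k + 2) hck (Nat.lt_succ_self _)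
    ((hcp.append (hkv.cons_cons c)).append (List.Sublist.refl [k + 2]))

/-- Let `K` be the largest letter. A letter `c` repeated before the first `K - 1` would begin an
occurrence `c c (K - 1) K` of `1123`. -/
theorem range'_prefix_of_isRGF {w : List ℕ} (hw : IsRGF w) (hav : PatAvoids w [1, 1, 2, 3]) :
    List.range' 1 (maxLetter w - 1) <+: w := by
  induction w using List.reverseRecOn with
  | nil => simp [maxLetter]
  | append_singleton w a ih =>
    have hpos : ∀ b ∈ w, 1 ≤ b := fun b hb => hw.1 b (List.mem_append_left _ hb)
    obtain ⟨hw, -, ha⟩ := isRGF_concat_iff.1 hw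
    have ih := ih hw (hav.of_sublist (List.sublist_append_left w [a]))
    rw [maxLetter_concat]
    refine List.IsPrefix.trans ?_ (List.prefix_append w [a])
    rcases Nat.le_succ_iff.1 ha with ha | rfl
    · rwa [max_eq_left ha]
    rw [max_eq_right (Nat.le_succ _), Nat.succ_sub_one]
    rcases hM : maxLetter w with _ | k
    · exact List.nil_prefix
    rw [hM, Nat.add_sub_cancel] at ih
    obtain ⟨u, rfl⟩ := ih
    have hle := maxLetter_le_iff.1 hM.le
    have hmem : k + 1 ∈ List.range' 1 k ++ u := hM ▸ maxLetter_mem (hM.trans_ne k.succ_ne_zero)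
    rw [hM] at hav
    refine range'_prefix_append hav (fun b hb => hpos b (List.mem_append_right _ hb))
      (fun b hb => hle b (List.mem_append_right _ hb)) ?_
    simpa [List.mem_append, add_comm] using hmem

theorem maxLetter_range' (k : ℕ) : maxLetter (List.range' 1 k) = k := by
  induction k with
  | zero => rfl
  | succ k ih => rw [List.range'_concat, maxLetter_concat, ih]; omega

theorem isRGF_range' (k : ℕ) : IsRGF (List.range' 1 k) := by
  induction k with
  | zero => exact isRGF_nil
  | succ k ih =>
    rw [List.range'_concat, isRGF_concat_iff, maxLetter_range']
    exact ⟨ih, by omega, by omega⟩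

theorem isRGF_range'_append {k : ℕ} {u : List ℕ} (hu : ∀ a ∈ u, a ∈ Icc 1 (k + 1)) :
    IsRGF (List.range' 1 k ++ u) := by
  induction u using List.reverseRecOn with
  | nil => simpa using isRGF_range' k
  | append_singleton u a ih =>
    have ha := mem_Icc.1 (hu a (List.mem_append_right u (List.mem_singleton_self a)))
    rw [← List.append_assoc, isRGF_concat_iff, maxLetter_append, maxLetter_range']
    exact ⟨ih fun b hb => hu b (List.mem_append_left _ hb), ha.1, by omega⟩

end RestrictedGrowth

section Tails

variable {k : ℕ} {u : List ℕ}

theorem avoids123_iff_not_sublist {α : Type*} [LinearOrder α] {u : List α} :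
    Avoids123 u ↔ ∀ a b c, a < b → b < c → ¬[a, b, c] <+ u := by
  induction u with
  | nil => simp [Avoids123]
  | cons y u ih =>
    have hcons : Avoids123 (y :: u) ↔
        (∀ b c, [b, c] <+ u → y < b → c ≤ b) ∧ Avoids123 u := by
      rw [Avoids123, List.triplewise_cons, List.pairwise_iff_forall_sublist]
      rfl
    rw [hcons, ih]
    simp only [List.cons_sublist_cons']
    grind

theorem patAvoids_1123_range'_append_iff (hu : ∀ a ∈ u, a ∈ Icc 1 (k + 2)) :
    PatAvoids (List.range' 1 (k + 1) ++ u) [1, 1, 2, 3] ↔ Avoids123 u := by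
  rw [patAvoids_1123_iff, avoids123_iff_not_sublist]
  constructor
  · intro h a b c hab hbc hsub
    have hc := mem_Icc.1 (hu c (hsub.subset (by simp)))
    have ha := mem_Icc.1 (hu a (hsub.subset (by simp)))
    have hap : [a] <+ List.range' 1 (k + 1) :=
      List.singleton_sublist.2 (List.mem_range'_1.2 ⟨ha.1, by omega⟩)
    exact h a b c hab hbc (hap.append hsub)
  · intro h a b c hab hbc hsub
    obtain ⟨l₁, l₂, heq, h₁, h₂⟩ := List.sublist_append_iff.1 hsub
    have hnodup : l₁.Nodup := h₁.nodup List.nodup_range'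
    refine h a b c hab hbc (List.Sublist.trans ?_ h₂)
    rcases l₁ with _ | ⟨x, _ | ⟨y, l⟩⟩
    · rw [← List.nil_append l₂, ← heq]
      exact List.sublist_cons_self a _
    · obtain ⟨-, rfl⟩ := List.cons_eq_cons.1 heq
      exact List.Sublist.refl _
    · simp only [List.nodup_cons, List.mem_cons, List.cons_append, List.cons.injEq] at hnodup heq
      exact absurd (heq.1.symm.trans heq.2.1) fun h => hnodup.1 (.inl h)

theorem mem_Icc_of_mem_range'_append (hu : ∀ a ∈ u, a ∈ Icc 1 (k + 2)) {a : ℕ}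
    (ha : a ∈ List.range' 1 (k + 1) ++ u) : a ∈ Icc 1 (k + 2) := by
  rcases List.mem_append.1 ha with ha | ha
  · rw [List.mem_range'_1] at ha
    exact mem_Icc.2 ⟨ha.1, by omega⟩
  · exact hu a ha

theorem count_range'_append_le (a : ℕ) :
    (List.range' 1 (k + 1) ++ u).count a ≤ u.count a + 1 := by
  rw [List.count_append, add_comm]
  exact Nat.add_le_add_left (List.nodup_iff_count_le_one.1 List.nodup_range' a) _

theorem patAvoids_1211_range'_append_iff (hu : ∀ a ∈ u, a ∈ Icc 1 (k + 2)) :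
    PatAvoids (List.range' 1 (k + 1) ++ u) [1, 2, 1, 1] ↔
      (∀ a ∈ Icc 1 k, u.count a ≤ 1) ∧ ¬[k + 2, k + 1, k + 1] <+ u := by
  rw [patAvoids_1211_iff]
  constructor
  · refine fun h => ⟨fun a ha => ?_, fun hsub => ?_⟩
    · by_contra! hcount
      rw [mem_Icc] at ha
      have hap : [a, k + 1] <+ List.range' 1 (k + 1) := by
        rw [List.range'_concat, one_mul, add_comm 1 k]
        exact (List.singleton_sublist.2 (List.mem_range'_1.2 ⟨ha.1, by omega⟩)).append
          (List.Sublist.refl [k + 1])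
      exact h a (k + 1) (Nat.lt_succ_of_le ha.2)
        (hap.append (List.replicate_sublist_iff.2 hcount))
    · have hk : [k + 1] <+ List.range' 1 (k + 1) :=
        List.singleton_sublist.2 (List.mem_range'_1.2 ⟨by omega, by omega⟩)
      exact h (k + 1) (k + 2) (Nat.lt_succ_self _) (hk.append hsub)
  · rintro ⟨hcount, hnot⟩ a b hab hsub
    have ha := mem_Icc.1 (mem_Icc_of_mem_range'_append hu (hsub.subset (by simp : a ∈ _)))
    have hb := mem_Icc.1 (mem_Icc_of_mem_range'_append hu (hsub.subset (by simp : b ∈ _)))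
    have ha3 : [a, b, a, a].count a ≤ _ := (hsub.count_le a).trans (count_range'_append_le a)
    have hak : a = k + 1 := by
      by_contra hne
      have ha1 := hcount a (mem_Icc.2 ⟨ha.1, by omega⟩)
      have hcount_word : [a, b, a, a].count a = 3 := by simp [hab.ne']
      omega
    obtain rfl : b = k + 2 := by omega
    subst hak
    obtain ⟨l₁, l₂, heq, h₁, h₂⟩ := List.sublist_append_iff.1 (List.sublist_of_cons_sublist hsub)
    rcases l₁ with _ | ⟨x, l⟩
    · exact hnot (heq ▸ h₂)
    · have hx := List.mem_range'_1.1 (h₁.subset List.mem_cons_self)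
      have := (List.cons_eq_cons.1 heq).1
      omega

theorem patAvoids_1222_range'_append_iff (hu : ∀ a ∈ u, a ∈ Icc 1 (k + 2)) :
    PatAvoids (List.range' 1 (k + 1) ++ u) [1, 2, 2, 2] ↔
      (∀ a ∈ Icc 2 (k + 1), u.count a ≤ 1) ∧ u.count (k + 2) ≤ 2 := by
  rw [patAvoids_1222_iff]
  constructor
  · refine fun h => ⟨fun a ha => ?_, ?_⟩ <;> by_contra! hcount
    · rw [mem_Icc] at ha
      have hap : [1, a] <+ List.range' 1 (k + 1) := by
        rw [List.range'_succ]
        exact (List.singleton_sublist.2 (List.mem_range'_1.2 ⟨ha.1, by omega⟩)).cons_cons 1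
      exact h 1 a ha.1 (hap.append (List.replicate_sublist_iff.2 hcount))
    · have hone : [1] <+ List.range' 1 (k + 1) :=
        List.singleton_sublist.2 (List.mem_range'_1.2 ⟨le_rfl, by omega⟩)
      exact h 1 (k + 2) (by omega) (hone.append (List.replicate_sublist_iff.2 hcount))
  · rintro ⟨hcount, htop⟩ a b hab hsub
    have ha := mem_Icc.1 (mem_Icc_of_mem_range'_append hu (hsub.subset (by simp : a ∈ _)))
    have hb := mem_Icc.1 (mem_Icc_of_mem_range'_append hu (hsub.subset (by simp : b ∈ _)))
    have hb3 : 3 ≤ (List.range' 1 (k + 1) ++ u).count b :=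
      List.replicate_sublist_iff.1 (List.sublist_of_cons_sublist hsub)
    rcases hb.2.lt_or_eq with hbk | rfl
    · have hb1 := hcount b (mem_Icc.2 ⟨by omega, by omega⟩)
      have := hb3.trans (count_range'_append_le b)
      omega
    · have hnotin : k + 2 ∉ List.range' 1 (k + 1) := by
        rw [List.mem_range'_1]
        omega
      rw [List.count_append, List.count_eq_zero.2 hnotin] at hb3
      omega

end Tails

section Counting

/-- The restricted growth functions of length `n` avoiding `1123` and `q`. -/
def avoidingRGFs (n : ℕ) (q : List ℕ) : Set (List ℕ) :=
  {w | IsRGF w ∧ w.length = n ∧ PatAvoids w [1, 1, 2, 3] ∧ PatAvoids w q}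

/-- The words `u` of length `r` that extend `12⋯(k+1)` to a restricted growth function with
largest letter `k + 2` avoiding `1123` and `q`. -/
def avoidingTails (k r : ℕ) (q : List ℕ) : Set (List ℕ) :=
  {u | (∀ a ∈ u, a ∈ Icc 1 (k + 2)) ∧ k + 2 ∈ u ∧ u.length = r ∧
    PatAvoids (List.range' 1 (k + 1) ++ u) [1, 1, 2, 3] ∧
    PatAvoids (List.range' 1 (k + 1) ++ u) q}

theorem maxLetter_mem_range_of_mem_avoidingRGFs {n : ℕ} {q w : List ℕ}
    (hw : w ∈ avoidingRGFs n q) : maxLetter w ∈ range (n + 1) :=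
  mem_range_succ_iff.2 (hw.2.1 ▸ maxLetter_le_length hw.1)

theorem finite_avoidingRGFs (n : ℕ) (q : List ℕ) : (avoidingRGFs n q).Finite :=
  (finite_setOfPred_forall_mem_length_eq (range (n + 1)) n).subset fun _ hw =>
    ⟨fun a ha => mem_range_succ_iff.2 <| (maxLetter_le_iff.1 le_rfl a ha).trans
      (mem_range_succ_iff.1 (maxLetter_mem_range_of_mem_avoidingRGFs hw)), hw.2.1⟩

theorem pCount_pair_eq_sum (n : ℕ) (q : List ℕ) : pCount n {[1, 1, 2, 3], q} =
    ∑ K ∈ range (n + 1), {w ∈ avoidingRGFs n q | maxLetter w = K}.ncard := by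
  rw [← ncard_eq_sum_ncard_fiber (finite_avoidingRGFs n q)
    fun _ => maxLetter_mem_range_of_mem_avoidingRGFs]
  simp [pCount, avoidingRGFs]

theorem setOfPred_maxLetter_eq_image_avoidingTails (k r : ℕ) (q : List ℕ) :
    {w ∈ avoidingRGFs (k + 1 + r) q | maxLetter w = k + 2} =
      (List.range' 1 (k + 1) ++ ·) '' avoidingTails k r q := by
  refine Set.Subset.antisymm ?_ ?_
  · rintro w ⟨⟨hw, hlen, h1123, hq⟩, hmax⟩
    obtain ⟨u, rfl⟩ := hmax ▸ range'_prefix_of_isRGF hw h1123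
    have hle := maxLetter_le_iff.1 hmax.le
    have hmem : k + 2 ∈ List.range' 1 (k + 1) ++ u :=
      hmax ▸ maxLetter_mem (hmax.trans_ne (k + 1).succ_ne_zero)
    refine ⟨u, ⟨fun a ha => ?_, ?_, ?_, h1123, hq⟩, rfl⟩
    · have ha := List.mem_append_right (List.range' 1 (k + 1)) ha
      exact mem_Icc.2 ⟨hw.1 a ha, hle a ha⟩
    · refine (List.mem_append.1 hmem).resolve_left fun h => ?_
      have := (List.mem_range'_1.1 h).2
      omega
    · simpa [List.length_append] using hlen
  · rintro _ ⟨u, ⟨hu, hmem, hlen, h1123, hq⟩, rfl⟩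
    refine ⟨⟨isRGF_range'_append hu, by simp [hlen], h1123, hq⟩, ?_⟩
    have hle : maxLetter u ≤ k + 2 := maxLetter_le_iff.2 fun a ha => (mem_Icc.1 (hu a ha)).2
    have hge := maxLetter_le_iff.1 le_rfl (k + 2) hmem
    rw [maxLetter_append, maxLetter_range']
    omega

theorem ncard_setOfPred_maxLetter_eq (k r : ℕ) (q : List ℕ) :
    {w ∈ avoidingRGFs (k + 1 + r) q | maxLetter w = k + 2}.ncard =
      (avoidingTails k r q).ncard := by
  rw [setOfPred_maxLetter_eq_image_avoidingTails,
    Set.ncard_image_of_injective _ (List.append_right_injective _)]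

theorem ncard_avoidingTails_1211 (k r : ℕ) :
    ((avoidingTails k r [1, 2, 1, 1]).ncard : ℤ) =
      ∑ p ∈ antidiagonal r, k.choose p.1 * ∑ q ∈ antidiagonal p.2, tailCount1211 p.1 q.1 q.2 := by
  have hIcc : insert (k + 1) (insert (k + 2) (Icc 1 k)) = Icc 1 (k + 2) := by
    ext a
    simp only [mem_insert, mem_Icc]
    omega
  have hcontent := ncard_eq_sum_antidiagonal_of_content (M := Icc 1 k) (z := k + 1) (t := k + 2)
    (P := fun u => Avoids123 u ∧ k + 2 ∈ u ∧ ¬[k + 2, k + 1, k + 1] <+ u) (by simp) (by simp)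
    (by simp) (fun S hS => ncard_content_eq_tailCount1211 (b := 0)
      (fun a ha => by have := mem_Icc.1 (hS ha); omega) (by omega) (by omega)) r
  rw [Nat.card_Icc, Nat.add_sub_cancel] at hcontent
  rw [← hcontent, hIcc]
  congr 2
  ext u
  simp only [avoidingTails, Set.mem_ofPred_eq]
  have h1123 := patAvoids_1123_range'_append_iff (k := k) (u := u)
  have h1211 := patAvoids_1211_range'_append_iff (k := k) (u := u)
  tauto

theorem ncard_avoidingTails_1222 (k r : ℕ) :
    ((avoidingTails k r [1, 2, 2, 2]).ncard : ℤ) =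
      ∑ p ∈ antidiagonal r, k.choose p.1 * ∑ q ∈ antidiagonal p.2, tailCount1222 p.1 q.1 q.2 := by
  have hIcc : insert 1 (insert (k + 2) (Icc 2 (k + 1))) = Icc 1 (k + 2) := by
    ext a
    simp only [mem_insert, mem_Icc]
    omega
  have hcontent := ncard_eq_sum_antidiagonal_of_content (M := Icc 2 (k + 1)) (z := 1) (t := k + 2)
    (P := fun u => Avoids123 u ∧ k + 2 ∈ u ∧ u.count (k + 2) ≤ 2) (by simp) (by simp) (by simp)
    (fun S hS => ncard_content_eq_tailCount1222
      (fun a ha => by have := mem_Icc.1 (hS ha); omega) (by omega)) r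
  rw [Nat.card_Icc, Nat.add_sub_add_right, Nat.add_sub_cancel] at hcontent
  rw [← hcontent, hIcc]
  congr 2
  ext u
  simp only [avoidingTails, Set.mem_ofPred_eq]
  have h1123 := patAvoids_1123_range'_append_iff (k := k) (u := u)
  have h1222 := patAvoids_1222_range'_append_iff (k := k) (u := u)
  tauto

theorem ncard_avoidingTails_1211_eq (k r : ℕ) :
    (avoidingTails k r [1, 2, 1, 1]).ncard = (avoidingTails k r [1, 2, 2, 2]).ncard := by
  rw [← Nat.cast_inj (R := ℤ), ncard_avoidingTails_1211, ncard_avoidingTails_1222]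
  simp only [sum_antidiagonal_tailCount1211_eq]

theorem setOfPred_maxLetter_eq_of_le_one {M : ℕ} (hM : M ≤ 1) (n : ℕ) :
    {w ∈ avoidingRGFs n [1, 2, 1, 1] | maxLetter w = M} =
      {w ∈ avoidingRGFs n [1, 2, 2, 2] | maxLetter w = M} := by
  ext w
  refine and_congr_left fun hmax => ?_
  simp only [avoidingRGFs, Set.mem_ofPred_eq]
  refine and_congr_right fun hw => and_congr_right' (and_congr_right' ?_)
  have hletter : ∀ a ∈ w, 1 ≤ a ∧ a ≤ 1 :=
    fun a ha => ⟨hw.1 a ha, maxLetter_le_iff.1 (hmax.trans_le hM) a ha⟩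
  have hpair {a b : ℕ} (hab : a < b) {v : List ℕ} : ¬ a :: b :: v <+ w := fun h => by
    have := hletter a (h.subset (by simp))
    have := hletter b (h.subset (by simp))
    omega
  rw [patAvoids_1211_iff, patAvoids_1222_iff]
  exact iff_of_true (fun a b hab => hpair hab) fun a b hab => hpair hab

end Counting

/-- The pattern pairs (1123,1211) and (1123,1222) are Wilf-equivalent. -/
theorem stmt19 :
    ∀ n : ℕ, pCount n {[1,1,2,3], [1,2,1,1]} = pCount n {[1,1,2,3], [1,2,2,2]} := by
  intro n
  rw [pCount_pair_eq_sum, pCount_pair_eq_sum]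
  refine sum_congr rfl fun K hK => ?_
  rcases le_or_gt K 1 with hK1 | hK1
  · rw [setOfPred_maxLetter_eq_of_le_one hK1]
  · obtain ⟨k, rfl⟩ := Nat.exists_eq_add_of_le' hK1
    obtain ⟨r, rfl⟩ : ∃ r, n = k + 1 + r :=
      Nat.exists_eq_add_of_le (Nat.le_of_succ_le (mem_range_succ_iff.1 hK))
    rw [ncard_setOfPred_maxLetter_eq, ncard_setOfPred_maxLetter_eq, ncard_avoidingTails_1211_eq]
end
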